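/- Fix an integer k ≥ 1 and suppose ρ : ℝ → (0,1) satisfies Φ_{(1)}(ρ(x)) = x for all sufficiently large x. Then for every integer m ≥ 1, as x → ∞, Φ_{(m)}(ρ(x)) = x^{(mk+1)/(k+1)} · ( log x / ( ((k+1)/k) ζ((k+1)/k) Γ((k+1)/k) ) )^{k(m−1)/(k+1)} · ( Γ(m + 1/k) / Γ(1 + 1/k) ) · ( 1 + O( (log log x)/(log x) ) ). -/

import Mathlib

/-!
Put `ρ = e^{-u}` and `L = log (1/u)`. With the kernel `H(x) = exp (b x - e^{k x})`, `b = 1 + k m`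
(`kerH`), every term of the double series can be rewritten so that

  `Φ_(m)(e^{-u}) = u^{-m-1/k} ∑_j j^{-1-1/k} T((L - log j)/k)`,  `T(X) = ∑_p p⁻¹ H(log p - X)`

(`phim_eq`, `primeT`). Everything rests on the asymptotics of `T(X)` as `X → ∞`, which is a prime
number theorem for the Schwartz weight `H`, with an error term saving one power of `X`.

*Smoothed prime number theorem.* Let `G(s) = -ζ'(s)/ζ(s) - 1/(s-1)` (`zetaG`). By Fourier inversion
and a passage to the limit `σ → 1⁺`, the difference `∑ Λ(n) n⁻¹ H(log n - X) - ∫_0^∞ H(t - X) dt`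
equals an oscillating integral of `Ĥ(τ) e^{-2πiτX} G(1 - 2πiτ)` (`smoothed_formula`). The formula
`(s - 1) ζ(s) = s - s (s - 1) ∫_1^∞ {t} t^{-s-1} dt` gives polynomial growth of `(s - 1) ζ(s)` and of
its derivatives, and the `3-4-1` inequality gives a polynomial lower bound on `Re s ≥ 1`; hence `G`
and `G'` grow polynomially on `Re s = 1` (`zetaG_bounds`), and one integration by parts makes the
integral `O(1/X)`. The main term is `∫ H = Γ(b/k)/k` (`smoothed_pnt`).

*From `Λ` to primes, and summation over `j`.* Proper prime powers contribute `O(e^{-X/4})`, and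
replacing `log p` by `X` costs `O(1/X)`, because `|x| H(x)` is dominated by kernels of the same
shape. This gives `X T(X) = Γ(b/k)/k + O(1/X)` (`primeT_asymp`), and summation over `j` gives

  `Φ_(m)(e^{-u}) u^{m+1/k} = ζ(1+1/k) Γ(m+1/k) / L + O(1/L²)`  (`phim_asymp`).

*Inversion.* Let `s = 1 + 1/k`. The case `m = 1` with `Φ_(1)(ρ(x)) = x` reads
`x u^s L = ζ(s) Γ(s) (1 + O(1/L))`; taking logarithms, `s L = log x + O(log log x)`. Eliminating `u`
between the cases `1` and `m` (`main_identity`) expresses `Φ_(m)(ρ(x))` as the main term times powers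
of factors which are all `1 + O(log log x / log x)`.
-/

open Filter

/-- `Φ_{(m)}(ρ) = (ρ d/dρ)^m Φ(ρ) = ∑_{j≥1} ∑_p j^{m-1} p^{km} ρ^{j p^k}`. -/
noncomputable def Phim (k m : ℕ) (ρ : ℝ) : ℝ :=
  ∑' (j : ℕ+) (p : Nat.Primes),
    (j : ℝ) ^ ((m : ℤ) - 1) * ((p : ℕ) : ℝ) ^ (k * m) * ρ ^ ((j : ℕ) * (p : ℕ) ^ k)

noncomputable def zetaR (s : ℝ) : ℝ := (riemannZeta (s : ℂ)).re

/-! ### Growth of `(s - 1) ζ(s)` in the half plane `Re s > 0` -/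

/-- The function whose Mellin transform at `-s` is `∫_1^∞ {t} t^{-s-1} dt`. -/
noncomputable def fractInd (t : ℝ) : ℂ := (Set.Ioi (1 : ℝ)).indicator (fun t => ((Int.fract t : ℝ) : ℂ)) t

lemma norm_fractInd_le (t : ℝ) : ‖fractInd t‖ ≤ 1 := by
  unfold fractInd
  by_cases h : t ∈ Set.Ioi (1 : ℝ)
  · rw [Set.indicator_of_mem h, Complex.norm_real, Real.norm_of_nonneg (Int.fract_nonneg t)]
    exact (Int.fract_lt_one t).le
  · rw [Set.indicator_of_notMem h]; simp

lemma measurable_fractInd : Measurable fractInd := by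
  unfold fractInd
  exact Measurable.indicator (by fun_prop) measurableSet_Ioi

open MeasureTheory in
lemma locallyIntegrable_fractInd : LocallyIntegrable fractInd := by
  refine (locallyIntegrable_const (1 : ℝ)).mono measurable_fractInd.aestronglyMeasurable ?_
  exact Eventually.of_forall fun t => by simpa using norm_fractInd_le t

lemma mellin_fractInd (s : ℂ) :
    mellin fractInd (-s) = ∫ t in Set.Ioi (1 : ℝ), ((Int.fract t : ℝ) : ℂ) * (t : ℂ) ^ (-(s + 1)) := by
  unfold mellin
  have : ∀ t : ℝ, ((t : ℂ) ^ (-s - 1)) • fractInd t =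
      (Set.Ioi (1 : ℝ)).indicator (fun t : ℝ => ((Int.fract t : ℝ) : ℂ) * (t : ℂ) ^ (-(s + 1))) t := by
    intro t
    unfold fractInd
    by_cases h : t ∈ Set.Ioi (1 : ℝ)
    · simp only [Set.indicator_of_mem h, smul_eq_mul]
      rw [mul_comm, neg_add']
    · simp [Set.indicator_of_notMem h]
  simp_rw [this]
  rw [MeasureTheory.setIntegral_indicator measurableSet_Ioi, Set.Ioi_inter_Ioi]
  simp

lemma differentiableAt_mellin_fractInd {s : ℂ} (hs : 0 < s.re) :
    DifferentiableAt ℂ (fun s => mellin fractInd (-s)) s := by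
  have h : DifferentiableAt ℂ (mellin fractInd) (-s) := by
    refine mellin_differentiableAt_of_isBigO_rpow (a := 0) (b := -s.re - 1)
      (locallyIntegrable_fractInd.locallyIntegrableOn _) ?_ (by simpa) ?_ (by simp)
    · refine Asymptotics.IsBigO.of_bound 1 (Eventually.of_forall fun t => ?_)
      simpa using norm_fractInd_le t
    · refine Asymptotics.IsBigO.of_bound 1 ?_
      filter_upwards [mem_nhdsWithin_of_mem_nhds (Iio_mem_nhds (zero_lt_one (α := ℝ)))] with t ht
      have : fractInd t = 0 := by
        unfold fractInd
        rw [Set.indicator_of_notMem]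
        simpa using (le_of_lt ht)
      rw [this, norm_zero]
      positivity
  exact h.comp s differentiableAt_id.neg

lemma norm_mellin_fractInd_le {s : ℂ} (hs : 0 < s.re) : ‖mellin fractInd (-s)‖ ≤ 1 / s.re := by
  rw [mellin_fractInd]
  have hI : ∫ t in Set.Ioi (1 : ℝ), t ^ (-(s.re + 1)) = 1 / s.re := by
    rw [integral_Ioi_rpow_of_lt (by linarith) zero_lt_one]
    simp
  rw [← hI]
  refine MeasureTheory.norm_integral_le_of_norm_le (integrableOn_Ioi_rpow_of_lt (by linarith) zero_lt_one) ?_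
  refine (MeasureTheory.ae_restrict_iff' measurableSet_Ioi).mpr (Eventually.of_forall fun t ht => ?_)
  have ht0 : 0 < t := zero_lt_one.trans ht
  rw [norm_mul, Complex.norm_cpow_eq_rpow_re_of_pos ht0, Complex.norm_real,
    Real.norm_of_nonneg (Int.fract_nonneg t)]
  simp only [Complex.neg_re, Complex.add_re, Complex.one_re]
  exact mul_le_of_le_one_left (by positivity) (Int.fract_lt_one t).le

/-- In the half plane of absolute convergence the formula is partial summation. -/
lemma riemannZeta₁_eq_aux {s : ℂ} (hs : 1 < s.re) :
    riemannZeta₁ s = s - s * (s - 1) * mellin fractInd (-s) := by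
  have hs1 : s ≠ 1 := by rintro rfl; simp at hs
  have hs1' : s - 1 ≠ 0 := sub_ne_zero.mpr hs1
  have h1 : riemannZeta s = s * ∫ t in Set.Ioi (1 : ℝ), (∑ k ∈ Finset.Icc 1 ⌊t⌋₊, (1 : ℕ → ℂ) k) * (t : ℂ) ^ (-(s + 1)) := by
    rw [← LSeries_one_eq_riemannZeta hs]
    refine LSeries_eq_mul_integral' 1 zero_le_one hs ?_
    refine Asymptotics.IsBigO.of_bound 1 (Eventually.of_forall fun n => ?_)
    simp
  have h2 : ∫ t in Set.Ioi (1 : ℝ), (∑ k ∈ Finset.Icc 1 ⌊t⌋₊, (1 : ℕ → ℂ) k) * (t : ℂ) ^ (-(s + 1))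
      = (∫ t in Set.Ioi (1 : ℝ), (t : ℂ) ^ (-s)) - mellin fractInd (-s) := by
    rw [mellin_fractInd, ← MeasureTheory.integral_sub]
    · refine MeasureTheory.setIntegral_congr_fun measurableSet_Ioi fun t ht => ?_
      have ht0 : 0 < t := zero_lt_one.trans ht
      have ht0' : (t : ℂ) ≠ 0 := by exact_mod_cast ht0.ne'
      have e1 : (∑ k ∈ Finset.Icc 1 ⌊t⌋₊, (1 : ℕ → ℂ) k) = (t : ℂ) - (Int.fract t : ℝ) := by
        have : ((⌊t⌋₊ : ℕ) : ℝ) = t - Int.fract t := by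
          rw [Int.self_sub_fract, natCast_floor_eq_intCast_floor ht0.le]
        simp only [Pi.one_apply, Finset.sum_const, Nat.card_Icc, add_tsub_cancel_right, nsmul_eq_mul, mul_one]
        rw [← Complex.ofReal_sub, ← this]; simp
      have e2 : (t : ℂ) ^ (-s) = t * (t : ℂ) ^ (-(s + 1)) := by
        rw [show -s = 1 + (-(s+1)) by ring, Complex.cpow_add _ _ ht0', Complex.cpow_one]
      simp only [e1, e2]; ring
    · exact integrableOn_Ioi_cpow_of_lt (by simpa using hs) zero_lt_one
    · refine MeasureTheory.Integrable.mono' (g := fun t : ℝ => t ^ (-(s.re + 1)))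
        (integrableOn_Ioi_rpow_of_lt (by linarith) zero_lt_one) ?_ ?_
      · refine AEMeasurable.aestronglyMeasurable ?_
        fun_prop
      · refine (MeasureTheory.ae_restrict_iff' measurableSet_Ioi).mpr (Eventually.of_forall fun t ht => ?_)
        have ht0 : 0 < t := zero_lt_one.trans ht
        rw [norm_mul, Complex.norm_cpow_eq_rpow_re_of_pos ht0, Complex.norm_real,
          Real.norm_of_nonneg (Int.fract_nonneg t)]
        simp only [Complex.neg_re, Complex.add_re, Complex.one_re]
        exact mul_le_of_le_one_left (by positivity) (Int.fract_lt_one t).le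
  have h3 : ∫ t in Set.Ioi (1 : ℝ), (t : ℂ) ^ (-s) = 1 / (s - 1) := by
    rw [integral_Ioi_cpow_of_lt (by simpa using hs) zero_lt_one]
    simp only [Complex.ofReal_one, Complex.one_cpow]
    rw [show -s + 1 = -(s - 1) by ring]
    field_simp
  rw [h2, h3, riemannZeta_eq_inv_sub_mul hs1] at h1
  field_simp at h1
  linear_combination h1

/-- `(s - 1) ζ(s) = s - s (s - 1) ∫_1^∞ {t} t^{-s-1} dt` continues to `Re s > 0`. -/
lemma riemannZeta₁_eq {s : ℂ} (hs : 0 < s.re) :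
    riemannZeta₁ s = s - s * (s - 1) * mellin fractInd (-s) := by
  have hopen : IsOpen {z : ℂ | 0 < z.re} := isOpen_lt continuous_const Complex.continuous_re
  have hd : DifferentiableOn ℂ (fun s => s - s * (s - 1) * mellin fractInd (-s)) {z : ℂ | 0 < z.re} := by
    intro z hz
    have := differentiableAt_mellin_fractInd hz
    exact DifferentiableAt.differentiableWithinAt (by fun_prop)
  have hA := hd.analyticOnNhd hopen
  have hB : AnalyticOnNhd ℂ riemannZeta₁ {z : ℂ | 0 < z.re} :=
    (differentiable_riemannZeta₁.differentiableOn).analyticOnNhd hopen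
  refine hB.eqOn_of_preconnected_of_eventuallyEq hA (convex_halfSpace_re_gt 0).isPreconnected
    (z₀ := 2) (by simp) ?_ hs
  filter_upwards [(isOpen_lt continuous_const Complex.continuous_re).mem_nhds
    (show (2 : ℂ) ∈ {z : ℂ | 1 < z.re} by simp)] with z hz
  exact riemannZeta₁_eq_aux hz

lemma norm_riemannZeta₁_le {s : ℂ} (hs : 1 / 2 ≤ s.re) :
    ‖riemannZeta₁ s‖ ≤ 3 * (1 + ‖s‖) ^ 2 := by
  have hs0 : 0 < s.re := by linarith
  rw [riemannZeta₁_eq hs0]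
  have h1 := norm_mellin_fractInd_le hs0
  have h2 : 1 / s.re ≤ 2 := by rw [div_le_iff₀ hs0]; linarith
  calc _ ≤ ‖s‖ + ‖s‖ * ‖s - 1‖ * ‖mellin fractInd (-s)‖ := by
        refine (norm_sub_le _ _).trans ?_
        rw [norm_mul, norm_mul]
    _ ≤ ‖s‖ + ‖s‖ * (‖s‖ + 1) * 2 := by
        gcongr
        · simpa using norm_sub_le s 1
        · exact h1.trans h2
    _ ≤ _ := by nlinarith [norm_nonneg s]

/-- A quadratic bound passes to the derivative by the Cauchy estimate on a circle of radius `1/4`. -/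
lemma deriv_bound_aux {f : ℂ → ℂ} (hf : Differentiable ℂ f) {A r : ℝ} (hA : 0 ≤ A)
    (h : ∀ s : ℂ, r ≤ s.re → ‖f s‖ ≤ A * (1 + ‖s‖) ^ 2) {s : ℂ} (hs : r + 1 / 4 ≤ s.re) :
    ‖deriv f s‖ ≤ (8 * A) * (1 + ‖s‖) ^ 2 := by
  have := Complex.norm_deriv_le_of_forall_mem_sphere_norm_le (c := s) (R := 1 / 4) (f := f)
    (C := 2 * A * (1 + ‖s‖) ^ 2) (by norm_num) hf.diffContOnCl ?_
  · refine this.trans (le_of_eq (by ring))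
  intro z hz
  have hz' : ‖z - s‖ = 1 / 4 := by simpa using hz
  have hre : |(z - s).re| ≤ 1 / 4 := hz' ▸ Complex.abs_re_le_norm (z - s)
  have hre' := (abs_le.mp hre).1
  rw [Complex.sub_re] at hre'
  have hn : ‖z‖ ≤ ‖s‖ + 1 / 4 := by
    calc ‖z‖ = ‖s + (z - s)‖ := by ring_nf
      _ ≤ ‖s‖ + ‖z - s‖ := norm_add_le _ _
      _ = _ := by rw [hz']
  refine (h z (by linarith)).trans ?_
  have : (1 + ‖z‖) ^ 2 ≤ 2 * (1 + ‖s‖) ^ 2 := by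
    nlinarith [norm_nonneg s, norm_nonneg z]
  nlinarith

lemma norm_deriv_riemannZeta₁_le {s : ℂ} (hs : 3 / 4 ≤ s.re) :
    ‖deriv riemannZeta₁ s‖ ≤ 24 * (1 + ‖s‖) ^ 2 := by
  have := deriv_bound_aux differentiable_riemannZeta₁ (A := 3) (r := 1/2) (by norm_num)
    (fun s hs => norm_riemannZeta₁_le hs) (s := s) (by linarith)
  linarith

lemma differentiable_deriv_riemannZeta₁ : Differentiable ℂ (deriv riemannZeta₁) := by
  have := (differentiable_riemannZeta₁.contDiff (n := 2))
  exact (this.differentiable_deriv_two)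

lemma norm_deriv_deriv_riemannZeta₁_le {s : ℂ} (hs : 1 ≤ s.re) :
    ‖deriv (deriv riemannZeta₁) s‖ ≤ 192 * (1 + ‖s‖) ^ 2 := by
  have := deriv_bound_aux differentiable_deriv_riemannZeta₁ (A := 24) (r := 3/4) (by norm_num)
    (fun s hs => norm_deriv_riemannZeta₁_le hs) (s := s) (by linarith)
  linarith

lemma riemannZeta₁_ne_zero {s : ℂ} (hs : 1 ≤ s.re) : riemannZeta₁ s ≠ 0 := by
  by_cases h : s = 1
  · simp [h]
  · intro h0
    apply riemannZeta_ne_zero_of_one_le_re hs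
    rw [riemannZeta_eq_inv_sub_mul h, h0, mul_zero]

/-! ### Lower bound on `Re s ≥ 1` and the logarithmic derivative -/

/-- The classical `3-4-1` inequality, rewritten for `(s - 1) ζ(s)`. -/
lemma norm_riemannZeta₁_pow_four_ge {x y : ℝ} (hx : 0 < x) (hx1 : x ≤ 1) (hy : 1 ≤ |y|) :
    x ^ 3 / (27 ^ 4 * (1 + |y|) ^ 2) ≤ ‖riemannZeta₁ (1 + x + Complex.I * y)‖ ^ 4 := by
  have h := DirichletCharacter.norm_LFunction_product_ge_one (N := 1) 1 hx y
  simp only [DirichletCharacter.LFunctionTrivChar, DirichletCharacter.LFunction_modOne_eq] at h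
  have n1 : (1 + x : ℂ) ≠ 1 := by
    intro h; have := congrArg Complex.re h; simp at this; exact hx.ne' this
  have n2 : (1 + x + Complex.I * y : ℂ) ≠ 1 := by
    intro h; have := congrArg Complex.re h; simp at this; exact hx.ne' this
  have n3 : (1 + x + 2 * Complex.I * y : ℂ) ≠ 1 := by
    intro h; have := congrArg Complex.re h; simp at this; exact hx.ne' this
  rw [riemannZeta_eq_inv_sub_mul n1, riemannZeta_eq_inv_sub_mul n2, riemannZeta_eq_inv_sub_mul n3] at h
  simp only [norm_mul, norm_pow, norm_inv] at h
  have a1 : ‖(1 + x : ℂ) - 1‖⁻¹ * ‖riemannZeta₁ (1 + x)‖ ≤ 27 / x := by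
    have e : ‖(1 + x : ℂ) - 1‖ = x := by simp [abs_of_pos hx]
    have : ‖riemannZeta₁ (1 + x)‖ ≤ 27 := by
      refine (norm_riemannZeta₁_le (by simp; linarith)).trans ?_
      have : ‖(1 + x : ℂ)‖ ≤ 2 := by
        refine (norm_add_le _ _).trans ?_
        simp [abs_of_pos hx]; linarith
      nlinarith [norm_nonneg (1 + x : ℂ)]
    rw [e, inv_mul_eq_div]
    gcongr
  have a2 : ‖(1 + x + Complex.I * y : ℂ) - 1‖⁻¹ * ‖riemannZeta₁ (1 + x + Complex.I * y)‖
      ≤ ‖riemannZeta₁ (1 + x + Complex.I * y)‖ := by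
    refine mul_le_of_le_one_left (norm_nonneg _) (inv_le_one_of_one_le₀ (hy.trans ?_))
    simpa using Complex.abs_im_le_norm ((1 + x + Complex.I * y : ℂ) - 1)
  have a3 : ‖(1 + x + 2 * Complex.I * y : ℂ) - 1‖⁻¹ * ‖riemannZeta₁ (1 + x + 2 * Complex.I * y)‖
      ≤ 27 * (1 + |y|) ^ 2 := by
    have : ‖riemannZeta₁ (1 + x + 2 * Complex.I * y)‖ ≤ 27 * (1 + |y|) ^ 2 := by
      refine (norm_riemannZeta₁_le (by simp; linarith)).trans ?_
      have : ‖(1 + x + 2 * Complex.I * y : ℂ)‖ ≤ 2 + 2 * |y| := by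
        refine (norm_add_le _ _).trans ?_
        have := norm_add_le (1 : ℂ) x
        simp [abs_of_pos hx] at this ⊢; linarith
      nlinarith [norm_nonneg (1 + x + 2 * Complex.I * y : ℂ), abs_nonneg y]
    refine (mul_le_of_le_one_left (norm_nonneg _) (inv_le_one_of_one_le₀ ?_)).trans this
    have := Complex.abs_im_le_norm ((1 + x + 2 * Complex.I * y : ℂ) - 1)
    simp at this
    linarith
  set A := ‖riemannZeta₁ (1 + x + Complex.I * y)‖ with hA
  have key : 1 ≤ (27 / x) ^ 3 * A ^ 4 * (27 * (1 + |y|) ^ 2) := by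
    refine h.le.trans ?_
    simp only [← norm_inv, ← norm_mul] at a1 a2 a3 ⊢
    gcongr
  rw [div_le_iff₀ (by positivity)]
  have : (27 / x) ^ 3 * A ^ 4 * (27 * (1 + |y|) ^ 2) = (A ^ 4 * (27 ^ 4 * (1 + |y|) ^ 2)) / x ^ 3 := by
    field_simp
  rw [this, le_div_iff₀ (by positivity)] at key
  linarith

lemma norm_riemannZeta₁_sub_le {x x' y : ℝ} (hx : 0 ≤ x) (hx1 : x ≤ 1) (hx' : 0 ≤ x') (hx1' : x' ≤ 1) :
    ‖riemannZeta₁ (1 + x' + Complex.I * y) - riemannZeta₁ (1 + x + Complex.I * y)‖ ≤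
      216 * (1 + |y|) ^ 2 * |x' - x| := by
  have hn : ∀ x : ℝ, 0 ≤ x → x ≤ 1 → ‖(1 + x + Complex.I * y : ℂ)‖ ≤ 2 + |y| := by
    intro x hx hx1
    refine (norm_add_le _ _).trans ?_
    have := norm_add_le (1 : ℂ) x
    simp [abs_of_nonneg hx] at this ⊢; linarith
  have := Convex.norm_image_sub_le_of_norm_deriv_le (𝕜 := ℂ) (f := riemannZeta₁)
    (s := {z : ℂ | 3 / 4 ≤ z.re} ∩ Metric.closedBall 0 (2 + |y|)) (C := 216 * (1 + |y|) ^ 2)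
    (x := 1 + x + Complex.I * y) (y := 1 + x' + Complex.I * y)
    (fun z _ => differentiable_riemannZeta₁ z) ?_
    ((convex_halfSpace_re_ge _).inter (convex_closedBall _ _)) ?_ ?_
  · refine this.trans (le_of_eq ?_)
    congr 1
    rw [show (1 + x' + Complex.I * y : ℂ) - (1 + x + Complex.I * y) = ((x' - x : ℝ) : ℂ) by push_cast; ring,
      Complex.norm_real, Real.norm_eq_abs]
  · rintro z ⟨hz1, hz2⟩
    have hz2' : ‖z‖ ≤ 2 + |y| := by simpa using hz2
    refine (norm_deriv_riemannZeta₁_le hz1).trans ?_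
    nlinarith [norm_nonneg z, abs_nonneg y]
  · refine ⟨by simp; linarith, by simpa using hn x hx hx1⟩
  · refine ⟨by simp; linarith, by simpa using hn x' hx' hx1'⟩

/-- Polynomial lower bound for `(s - 1) ζ(s)` on `1 ≤ Re s ≤ 2`, away from the real axis. The
abscissa `1 + x₀` at which the `3-4-1` inequality is combined with the derivative bound has
`x₀ = η⁴ (1 + |y|)⁻¹⁰`, and `η = 1/11664` is chosen so that `216 η = 1/54`. -/
lemma norm_riemannZeta₁_ge {x y : ℝ} (hx : 0 ≤ x) (hx1 : x ≤ 1) (hy : 1 ≤ |y|) :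
    (1 / 11664) ^ 3 / 54 / (1 + |y|) ^ 8 ≤ ‖riemannZeta₁ (1 + x + Complex.I * y)‖ := by
  set T := 1 + |y| with hT
  have hT1 : 1 ≤ T := by rw [hT]; linarith [abs_nonneg y]
  have hT0 : 0 < T := by linarith
  set η : ℝ := 1 / 11664 with hη
  have hη0 : 0 < η := by rw [hη]; norm_num
  set x₀ := η ^ 4 / T ^ 10 with hx₀
  have hx₀0 : 0 < x₀ := by positivity
  have hx₀1 : x₀ ≤ 1 := by
    rw [hx₀, div_le_one (by positivity)]
    exact (pow_le_one₀ hη0.le (by rw [hη]; norm_num)).trans (one_le_pow₀ hT1)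
  have big : ∀ x, x₀ ≤ x → x ≤ 1 → η ^ 3 / 27 / T ^ 8 ≤ ‖riemannZeta₁ (1 + x + Complex.I * y)‖ := by
    intro x h0 h1
    have := norm_riemannZeta₁_pow_four_ge (hx₀0.trans_le h0) h1 hy
    refine le_of_pow_le_pow_left₀ (n := 4) (by norm_num) (norm_nonneg _) (le_trans ?_ this)
    calc (η ^ 3 / 27 / T ^ 8) ^ 4 = x₀ ^ 3 / (27 ^ 4 * T ^ 2) := by
          rw [hx₀]; field_simp
      _ ≤ _ := by gcongr
  by_cases h : x₀ ≤ x
  · refine le_trans ?_ (big x h hx1)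
    gcongr; norm_num
  · push Not at h
    have h1 := big x₀ le_rfl hx₀1
    have h2 := norm_riemannZeta₁_sub_le (y := y) hx hx1 hx₀0.le hx₀1
    have h3 : 216 * T ^ 2 * |x₀ - x| ≤ η ^ 3 / 54 / T ^ 8 := by
      have : |x₀ - x| ≤ x₀ := by rw [abs_of_pos (by linarith)]; linarith
      calc 216 * T ^ 2 * |x₀ - x| ≤ 216 * T ^ 2 * x₀ := by gcongr
        _ = η ^ 3 / 54 / T ^ 8 := by rw [hx₀, hη]; field_simp; norm_num
    have h4 : ‖riemannZeta₁ (1 + x₀ + Complex.I * y)‖ ≤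
        ‖riemannZeta₁ (1 + x₀ + Complex.I * y) - riemannZeta₁ (1 + x + Complex.I * y)‖ +
        ‖riemannZeta₁ (1 + x + Complex.I * y)‖ := by
      simpa using norm_add_le (riemannZeta₁ (1 + x₀ + Complex.I * y) - riemannZeta₁ (1 + x + Complex.I * y))
        (riemannZeta₁ (1 + x + Complex.I * y))
    have h5 : η ^ 3 / 27 / T ^ 8 = η ^ 3 / 54 / T ^ 8 + η ^ 3 / 54 / T ^ 8 := by ring
    linarith

lemma norm_inv_riemannZeta₁_le : ∃ C : ℝ, 0 < C ∧ ∀ s : ℂ, 1 ≤ s.re → s.re ≤ 2 →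
    ‖(riemannZeta₁ s)⁻¹‖ ≤ C * (1 + |s.im|) ^ 8 := by
  have hcomp : IsCompact (Set.Icc (1 : ℝ) 2 ×ℂ Set.Icc (-1 : ℝ) 1) := isCompact_Icc.reProdIm isCompact_Icc
  obtain ⟨C₁, hC₁⟩ := hcomp.exists_bound_of_continuousOn (f := fun s => (riemannZeta₁ s)⁻¹) (by
    refine ContinuousOn.inv₀ differentiable_riemannZeta₁.continuous.continuousOn ?_
    intro s hs
    exact riemannZeta₁_ne_zero (Complex.mem_reProdIm.mp hs).1.1)
  set c : ℝ := (1 / 11664) ^ 3 / 54 with hc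
  have hc0 : 0 < c := by rw [hc]; norm_num
  refine ⟨max |C₁| (1 / c) + 1, by positivity, fun s h1 h2 => ?_⟩
  have hT : 1 ≤ (1 + |s.im|) ^ 8 := one_le_pow₀ (by linarith [abs_nonneg s.im])
  by_cases h : |s.im| ≤ 1
  · have := hC₁ s (Complex.mem_reProdIm.mpr ⟨⟨h1, h2⟩, abs_le.mp h⟩)
    have h3 : |C₁| ≤ max |C₁| (1 / c) := le_max_left _ _
    nlinarith [le_abs_self C₁, abs_nonneg C₁]
  · have := norm_riemannZeta₁_ge (x := s.re - 1) (y := s.im) (by linarith) (by linarith) (by linarith)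
    have e : (1 + ((s.re - 1 : ℝ) : ℂ) + Complex.I * s.im : ℂ) = s := by
      apply Complex.ext <;> simp
    rw [e, ← hc] at this
    have h3 : 1 / c ≤ max |C₁| (1 / c) := le_max_right _ _
    have h4 : ‖(riemannZeta₁ s)⁻¹‖ ≤ (c / (1 + |s.im|) ^ 8)⁻¹ := by
      rw [norm_inv]
      exact inv_anti₀ (by positivity) this
    refine h4.trans ?_
    rw [inv_div, div_eq_inv_mul, ← one_div]
    gcongr
    linarith

/-- `G(s) = -F'(s)/F(s)` with `F(s) = (s - 1) ζ(s)`; this is `-ζ'(s)/ζ(s) - 1/(s-1)`, regular on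
the closed half plane `Re s ≥ 1`. -/
noncomputable def zetaG (s : ℂ) : ℂ := -(deriv riemannZeta₁ s / riemannZeta₁ s)

lemma hasDerivAt_zetaG {s : ℂ} (hs : 1 ≤ s.re) :
    HasDerivAt zetaG (-((deriv (deriv riemannZeta₁) s * riemannZeta₁ s -
      deriv riemannZeta₁ s * deriv riemannZeta₁ s) / riemannZeta₁ s ^ 2)) s :=
  ((differentiable_deriv_riemannZeta₁ s).hasDerivAt.div (differentiable_riemannZeta₁ s).hasDerivAt
    (riemannZeta₁_ne_zero hs)).neg

lemma continuousOn_zetaG : ContinuousOn zetaG {s : ℂ | 1 ≤ s.re} :=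
  fun _ hs => (hasDerivAt_zetaG hs).continuousAt.continuousWithinAt

lemma continuousOn_deriv_zetaG : ContinuousOn (deriv zetaG) {s : ℂ | 1 ≤ s.re} := by
  have h2 : Continuous (deriv (deriv riemannZeta₁)) :=
    ((differentiable_deriv_riemannZeta₁.contDiff (n := 1))).continuous_deriv_one
  have h1 := differentiable_deriv_riemannZeta₁.continuous
  have h0 := differentiable_riemannZeta₁.continuous
  refine ContinuousOn.congr (f := fun s => (-((deriv (deriv riemannZeta₁) s * riemannZeta₁ s -
      deriv riemannZeta₁ s * deriv riemannZeta₁ s) / riemannZeta₁ s ^ 2))) ?_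
      (fun s hs => (hasDerivAt_zetaG hs).deriv)
  refine ContinuousOn.neg (ContinuousOn.div (by fun_prop) (by fun_prop) ?_)
  intro s hs
  exact pow_ne_zero _ (riemannZeta₁_ne_zero hs)

/-- The exponent `20` has no significance beyond being large enough for `G` and `G'` at once. -/
lemma zetaG_bounds : ∃ C : ℝ, 0 < C ∧ ∀ s : ℂ, 1 ≤ s.re → s.re ≤ 2 →
    ‖zetaG s‖ ≤ C * (1 + |s.im|) ^ 20 ∧ ‖deriv zetaG s‖ ≤ C * (1 + |s.im|) ^ 20 := by
  obtain ⟨C, hC, h⟩ := norm_inv_riemannZeta₁_le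
  refine ⟨(1728 * C) + 1728 * C + (216 * C) ^ 2, by positivity, fun s h1 h2 => ?_⟩
  have hi := h s h1 h2
  set T := 1 + |s.im| with hT
  have hT1 : 1 ≤ T := by rw [hT]; linarith [abs_nonneg s.im]
  have hn : 1 + ‖s‖ ≤ 3 * T := by
    have := Complex.norm_le_abs_re_add_abs_im s
    rw [abs_of_nonneg (by linarith)] at this
    rw [hT]; linarith [abs_nonneg s.im]
  have hn2 : (1 + ‖s‖) ^ 2 ≤ 9 * T ^ 2 := by
    calc (1 + ‖s‖) ^ 2 ≤ (3 * T) ^ 2 := by gcongr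
      _ = _ := by ring
  have d1 : ‖deriv riemannZeta₁ s‖ ≤ 216 * T ^ 2 :=
    (norm_deriv_riemannZeta₁_le (by linarith)).trans (by linarith)
  have d2 : ‖deriv (deriv riemannZeta₁) s‖ ≤ 1728 * T ^ 2 :=
    (norm_deriv_deriv_riemannZeta₁_le h1).trans (by linarith)
  have hT10 : T ^ 10 ≤ T ^ 20 := pow_le_pow_right₀ hT1 (by norm_num)
  have q1 : ‖deriv riemannZeta₁ s‖ * ‖(riemannZeta₁ s)⁻¹‖ ≤ 216 * C * T ^ 10 := by
    calc _ ≤ (216 * T ^ 2) * (C * T ^ 8) := by gcongr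
      _ = _ := by ring
  have q2 : ‖deriv (deriv riemannZeta₁) s‖ * ‖(riemannZeta₁ s)⁻¹‖ ≤ 1728 * C * T ^ 10 := by
    calc _ ≤ (1728 * T ^ 2) * (C * T ^ 8) := by gcongr
      _ = _ := by ring
  have hT20 : 0 ≤ T ^ 20 := by positivity
  constructor
  · unfold zetaG
    rw [norm_neg, div_eq_mul_inv, norm_mul]
    refine q1.trans ?_
    nlinarith [mul_le_mul_of_nonneg_left hT10 hC.le, mul_nonneg hC.le hT20, mul_nonneg (sq_nonneg (216 * C)) hT20]
  · rw [(hasDerivAt_zetaG h1).deriv]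
    have e : (deriv (deriv riemannZeta₁) s * riemannZeta₁ s -
      deriv riemannZeta₁ s * deriv riemannZeta₁ s) / riemannZeta₁ s ^ 2 =
      deriv (deriv riemannZeta₁) s * (riemannZeta₁ s)⁻¹ - (deriv riemannZeta₁ s * (riemannZeta₁ s)⁻¹) ^ 2 := by
      have := riemannZeta₁_ne_zero h1
      field_simp
    rw [e, norm_neg]
    refine (norm_sub_le _ _).trans ?_
    rw [norm_pow, norm_mul, norm_mul]
    have q3 : (‖deriv riemannZeta₁ s‖ * ‖(riemannZeta₁ s)⁻¹‖) ^ 2 ≤ (216 * C) ^ 2 * T ^ 20 := by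
      calc _ ≤ (216 * C * T ^ 10) ^ 2 := by gcongr
        _ = _ := by ring
    nlinarith [mul_le_mul_of_nonneg_left hT10 hC.le, mul_nonneg hC.le hT20]

lemma LSeries_vonMangoldt_eq_zetaG {s : ℂ} (hs : 1 < s.re) :
    LSeries (fun n => (ArithmeticFunction.vonMangoldt n : ℂ)) s = 1 / (s - 1) + zetaG s := by
  have hs1 : s ≠ 1 := by rintro rfl; simp at hs
  have hs1' : s - 1 ≠ 0 := sub_ne_zero.mpr hs1
  have := riemannZeta₁_ne_zero hs.le
  rw [ArithmeticFunction.LSeries_vonMangoldt_eq_deriv_riemannZeta_div hs,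
    deriv_riemannZeta_eq_neg_inv_sub_sq_mul_add hs1, riemannZeta_eq_inv_sub_mul hs1, zetaG]
  field_simp
  ring

/-! ### The kernel `t^b e^{-t^k}` -/

/-- The kernel `t^b e^{-t^k}` in the variable `x = log t`. -/
noncomputable def kerH (k : ℕ) (b x : ℝ) : ℝ := Real.exp (b * x - Real.exp (k * x))

lemma kerH_pos (k : ℕ) (b x : ℝ) : 0 < kerH k b x := Real.exp_pos _

lemma kerH_mul_exp (k : ℕ) (b c x : ℝ) : kerH k b x * Real.exp (c * x) = kerH k (b + c) x := by
  unfold kerH; rw [← Real.exp_add]; congr 1; ring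

/-- `kerH k b` is dominated by `e^{ax}` for every `a ≤ b`, negative `a` included. -/
lemma kerH_le_exp {k : ℕ} (hk : 1 ≤ k) {a b : ℝ} (hab : a ≤ b) :
    ∃ C : ℝ, 0 < C ∧ ∀ x, kerH k b x ≤ C * Real.exp (a * x) := by
  obtain ⟨M, hM⟩ := exists_nat_ge (b - a)
  refine ⟨(M.factorial : ℝ) + 1, by positivity, fun x => ?_⟩
  rcases le_total x 0 with hx | hx
  · calc kerH k b x ≤ Real.exp (a * x) := by
          unfold kerH
          apply Real.exp_le_exp.mpr
          have := Real.exp_pos (k * x)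
          nlinarith
      _ ≤ _ := le_mul_of_one_le_left (Real.exp_pos _).le (by
          have : (0:ℝ) ≤ M.factorial := by positivity
          linarith)
  · have hk' : (1 : ℝ) ≤ k := by exact_mod_cast hk
    have h1 := Real.pow_div_factorial_le_exp (Real.exp x) (Real.exp_pos x).le M
    rw [div_le_iff₀ (by positivity), ← Real.exp_nat_mul] at h1
    have h2 : kerH k b x ≤ Real.exp (a * x) * Real.exp (M * x) * Real.exp (-Real.exp x) := by
      unfold kerH
      rw [← Real.exp_add, ← Real.exp_add]
      apply Real.exp_le_exp.mpr
      have : Real.exp x ≤ Real.exp (k * x) := Real.exp_le_exp.mpr (by nlinarith)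
      nlinarith
    have h3 : Real.exp (M * x) * Real.exp (-Real.exp x) ≤ M.factorial := by
      rw [Real.exp_neg, ← div_eq_mul_inv, div_le_iff₀ (Real.exp_pos _)]
      linarith
    calc kerH k b x ≤ Real.exp (a * x) * (Real.exp (M * x) * Real.exp (-Real.exp x)) := by
          rw [← mul_assoc]; exact h2
      _ ≤ Real.exp (a * x) * M.factorial := by gcongr
      _ ≤ _ := by nlinarith [Real.exp_pos (a * x)]

lemma abs_pow_mul_kerH_le {k : ℕ} (hk : 1 ≤ k) {b : ℝ} (hb : 0 < b) (N : ℕ) :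
    ∃ C : ℝ, 0 < C ∧ ∀ x, |x| ^ N * kerH k b x ≤ C := by
  obtain ⟨C₁, hC₁, h₁⟩ := kerH_le_exp hk (le_refl b)
  obtain ⟨C₂, hC₂, h₂⟩ := kerH_le_exp hk (show -b ≤ b by linarith)
  refine ⟨max C₁ C₂ * (N.factorial / b ^ N), by positivity, fun x => ?_⟩
  have h3 : kerH k b x ≤ max C₁ C₂ * Real.exp (-(b * |x|)) := by
    rcases le_total x 0 with hx | hx
    · refine (h₁ x).trans ?_
      rw [abs_of_nonpos hx]
      simp only [mul_neg, neg_neg]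
      gcongr; exact le_max_left _ _
    · refine (h₂ x).trans ?_
      rw [abs_of_nonneg hx, neg_mul]
      gcongr; exact le_max_right _ _
  have h4 := Real.pow_div_factorial_le_exp (b * |x|) (by positivity) N
  rw [div_le_iff₀ (by positivity), mul_pow] at h4
  have h5 : |x| ^ N * Real.exp (-(b * |x|)) ≤ N.factorial / b ^ N := by
    rw [Real.exp_neg, ← div_eq_mul_inv, div_le_div_iff₀ (Real.exp_pos _) (by positivity)]
    linarith
  calc |x| ^ N * kerH k b x ≤ |x| ^ N * (max C₁ C₂ * Real.exp (-(b * |x|))) := by gcongr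
    _ = max C₁ C₂ * (|x| ^ N * Real.exp (-(b * |x|))) := by ring
    _ ≤ _ := by gcongr

lemma contDiff_kerH (k : ℕ) (b : ℝ) (n : WithTop ℕ∞) :
    ContDiff ℝ n (fun x => ((kerH k b x : ℝ) : ℂ)) := by
  have : ContDiff ℝ n (kerH k b) := by unfold kerH; fun_prop
  exact Complex.ofRealCLM.contDiff.comp this

lemma deriv_kerH (k : ℕ) (b : ℝ) : deriv (fun x => ((kerH k b x : ℝ) : ℂ)) =
    (b : ℂ) • (fun x => ((kerH k b x : ℝ) : ℂ)) - (k : ℂ) • (fun x => ((kerH k (b + k) x : ℝ) : ℂ)) := by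
  ext x
  have h : HasDerivAt (kerH k b) (b * kerH k b x - k * kerH k (b + k) x) x := by
    have h1 : HasDerivAt (fun x : ℝ => b * x - Real.exp (k * x)) (b - Real.exp (k * x) * k) x := by
      have h2 : HasDerivAt (fun x : ℝ => (k:ℝ) * x) k x := by
        simpa using (hasDerivAt_id x).const_mul (k : ℝ)
      have h3 : HasDerivAt (fun x : ℝ => b * x) b x := by
        simpa using (hasDerivAt_id x).const_mul b
      exact h3.sub h2.exp
    have h4 := h1.exp
    refine h4.congr_deriv ?_
    rw [← kerH_mul_exp]; unfold kerH; ring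
  rw [h.ofReal_comp.deriv]
  simp

/-- By induction on `n`: the derivative of a kernel is a combination of the kernels with
parameters `b` and `b + k`. -/
lemma decay_kerH {k : ℕ} (hk : 1 ≤ k) (N n : ℕ) : ∀ b : ℝ, 0 < b →
    ∃ C : ℝ, ∀ x : ℝ, |x| ^ N * ‖iteratedDeriv n (fun x => ((kerH k b x : ℝ) : ℂ)) x‖ ≤ C := by
  induction n with
  | zero =>
    intro b hb
    obtain ⟨C, _, h⟩ := abs_pow_mul_kerH_le hk hb N
    refine ⟨C, fun x => ?_⟩
    simpa [abs_of_pos (kerH_pos k b x)] using h x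
  | succ n ih =>
    intro b hb
    obtain ⟨C₁, h₁⟩ := ih b hb
    obtain ⟨C₂, h₂⟩ := ih (b + k) (by positivity)
    refine ⟨b * C₁ + k * C₂, fun x => ?_⟩
    rw [iteratedDeriv_succ', deriv_kerH, iteratedDeriv_sub, iteratedDeriv_const_smul_field,
      iteratedDeriv_const_smul_field]
    · have h := norm_sub_le ((b : ℂ) • iteratedDeriv n (fun x => ((kerH k b x : ℝ) : ℂ)) x)
        ((k : ℂ) • iteratedDeriv n (fun x => ((kerH k (b + k) x : ℝ) : ℂ)) x)
      rw [norm_smul, norm_smul, Complex.norm_real, Complex.norm_natCast, Real.norm_of_nonneg hb.le] at h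
      refine (mul_le_mul_of_nonneg_left h (by positivity)).trans ?_
      have e1 := mul_le_mul_of_nonneg_left (h₁ x) hb.le
      have e2 := mul_le_mul_of_nonneg_left (h₂ x) (Nat.cast_nonneg (α := ℝ) k)
      linarith
    · exact ((contDiff_kerH k b n).const_smul (b : ℂ)).contDiffAt
    · exact ((contDiff_kerH k (b + k) n).const_smul (k : ℂ)).contDiffAt

/-- `kerH k b` as a Schwartz function. -/
noncomputable def kerS {k : ℕ} (hk : 1 ≤ k) {b : ℝ} (hb : 0 < b) : SchwartzMap ℝ ℂ where
  toFun := fun x => ((kerH k b x : ℝ) : ℂ)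
  smooth' := contDiff_kerH k b _
  decay' := by
    intro N n
    obtain ⟨C, h⟩ := decay_kerH hk N n b hb
    refine ⟨C, fun x => ?_⟩
    rw [norm_iteratedFDeriv_eq_norm_iteratedDeriv, Real.norm_eq_abs]
    exact h x

lemma kerS_apply {k : ℕ} (hk : 1 ≤ k) {b : ℝ} (hb : 0 < b) (x : ℝ) :
    kerS hk hb x = ((kerH k b x : ℝ) : ℂ) := rfl

lemma integrable_kerH {k : ℕ} (hk : 1 ≤ k) {b : ℝ} (hb : 0 < b) :
    MeasureTheory.Integrable (kerH k b) := by
  have := (kerS hk hb).integrable (μ := MeasureTheory.volume)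
  have := this.re
  simpa [kerS_apply] using this

lemma integral_kerH {k : ℕ} (hk : 1 ≤ k) {b : ℝ} (hb : 0 < b) :
    ∫ x, kerH k b x = 1 / k * Real.Gamma (b / k) := by
  have hk0 : (0 : ℝ) < k := by exact_mod_cast hk
  have h1 := integral_rpow_mul_exp_neg_rpow (p := k) (q := b - 1) hk0 (by linarith)
  rw [sub_add_cancel] at h1
  rw [← h1]
  have h2 := MeasureTheory.integral_image_eq_integral_abs_deriv_smul (s := Set.univ)
    MeasurableSet.univ (f := Real.exp) (f' := Real.exp) (fun x _ => (Real.hasDerivAt_exp x).hasDerivWithinAt)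
    Real.exp_injective.injOn (fun x => x ^ (b - 1) * Real.exp (-x ^ (k : ℝ)))
  rw [Set.image_univ, Real.range_exp] at h2
  rw [h2, MeasureTheory.setIntegral_univ]
  congr 1
  ext x
  rw [abs_of_pos (Real.exp_pos x), smul_eq_mul, ← Real.exp_mul, ← Real.exp_mul, ← mul_assoc, ← Real.exp_add,
    ← Real.exp_add]
  unfold kerH
  congr 1
  rw [mul_comm (k : ℝ) x]
  ring

/-! ### A smoothed explicit formula on `Re s = 1` -/

open MeasureTheory in
lemma schwartz_inversion (H : SchwartzMap ℝ ℂ) (x : ℝ) :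
    H x = ∫ τ : ℝ, Complex.exp ((2 * Real.pi * τ * x : ℝ) * Complex.I) * FourierTransform.fourier H τ := by
  have h : FourierTransformInv.fourierInv (FourierTransform.fourier H) = H :=
    FourierPair.fourierInv_fourier_eq H
  have h2 := congrFun (SchwartzMap.fourierInv_coe (FourierTransform.fourier H)) x
  rw [h, Real.fourierInv_eq'] at h2
  rw [h2]
  congr 1; ext τ
  simp only [smul_eq_mul, RCLike.inner_apply, conj_trivial]
  congr 4; ring

/-- The phase `e^{-2πiτX}`. -/
noncomputable def phase (X τ : ℝ) : ℂ := Complex.exp ((-2 * Real.pi * (τ * X) : ℝ) * Complex.I)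

lemma norm_phase (X τ : ℝ) : ‖phase X τ‖ = 1 := Complex.norm_exp_ofReal_mul_I _

lemma continuous_phase (X : ℝ) : Continuous (phase X) := by unfold phase; fun_prop

/-- The point `σ - 2πiτ` of the line `Re s = σ`. -/
noncomputable def linePt (σ τ : ℝ) : ℂ := (σ : ℂ) - (2 * Real.pi * τ : ℝ) * Complex.I

lemma linePt_re (σ τ : ℝ) : (linePt σ τ).re = σ := by simp [linePt]

lemma linePt_im (σ τ : ℝ) : (linePt σ τ).im = -(2 * Real.pi * τ) := by simp [linePt]

lemma continuous_linePt (σ : ℝ) : Continuous (linePt σ) := by unfold linePt; fun_prop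

lemma term_vonMangoldt_linePt (σ τ X : ℝ) (n : ℕ) :
    phase X τ * LSeries.term (fun n => (ArithmeticFunction.vonMangoldt n : ℂ)) (linePt σ τ) n =
      ((ArithmeticFunction.vonMangoldt n * (n : ℝ) ^ (-σ) : ℝ) : ℂ) *
        Complex.exp ((2 * Real.pi * τ * (Real.log n - X) : ℝ) * Complex.I) := by
  rcases Nat.eq_zero_or_pos n with rfl | hn
  · simp
  have hn0 : (0 : ℝ) < n := by exact_mod_cast hn
  rw [LSeries.term_of_ne_zero hn.ne', Complex.cpow_def_of_ne_zero (by exact_mod_cast hn.ne'),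
    Real.rpow_def_of_pos hn0, div_eq_mul_inv, ← Complex.exp_neg]
  push_cast
  unfold phase linePt
  push_cast
  rw [mul_left_comm, ← Complex.exp_add, mul_assoc (ArithmeticFunction.vonMangoldt n : ℂ),
    ← Complex.exp_add]
  congr 2
  ring

open MeasureTheory in
/-- Fourier inversion applied to `H` termwise in the Dirichlet series of `-ζ'/ζ`. -/
lemma sum_eq_integral (H : SchwartzMap ℝ ℂ) (X : ℝ) {σ : ℝ} (hσ : 1 < σ) :
    ∑' n : ℕ, ((ArithmeticFunction.vonMangoldt n * (n : ℝ) ^ (-σ) : ℝ) : ℂ) * H (Real.log n - X) =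
      ∫ τ : ℝ, FourierTransform.fourier H τ * (phase X τ *
        LSeries (fun n => (ArithmeticFunction.vonMangoldt n : ℂ)) (linePt σ τ)) := by
  set F := FourierTransform.fourier H
  have hFi : Integrable F := F.integrable
  have hsum : Summable fun n : ℕ => ArithmeticFunction.vonMangoldt n * (n : ℝ) ^ (-σ) := by
    have := (ArithmeticFunction.LSeriesSummable_vonMangoldt (s := (σ : ℂ)) (by simpa using hσ)).norm
    refine this.congr fun n => ?_
    rcases Nat.eq_zero_or_pos n with rfl | hn
    · simp
    rw [LSeries.norm_term_eq, if_neg hn.ne', Complex.ofReal_re, Complex.norm_real,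
      Real.norm_of_nonneg ArithmeticFunction.vonMangoldt_nonneg, Real.rpow_neg (by positivity),
      div_eq_mul_inv]
  have key := hasSum_integral_of_summable_integral_norm (μ := volume)
    (F := fun (n : ℕ) (τ : ℝ) => F τ * (phase X τ *
      LSeries.term (fun n => (ArithmeticFunction.vonMangoldt n : ℂ)) (linePt σ τ) n)) ?_ ?_
  · have h1 : ∀ n : ℕ, ∫ τ : ℝ, F τ * (phase X τ *
        LSeries.term (fun n => (ArithmeticFunction.vonMangoldt n : ℂ)) (linePt σ τ) n) =
        ((ArithmeticFunction.vonMangoldt n * (n : ℝ) ^ (-σ) : ℝ) : ℂ) * H (Real.log n - X) := by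
      intro n
      rw [schwartz_inversion, ← integral_const_mul]
      congr 1; ext τ
      rw [term_vonMangoldt_linePt]; ring
    simp_rw [h1] at key
    rw [key.tsum_eq]
    congr 1; ext τ
    rw [tsum_mul_left, tsum_mul_left]; rfl
  · intro n
    simp_rw [term_vonMangoldt_linePt]
    refine hFi.mul_bdd (c := |ArithmeticFunction.vonMangoldt n * (n : ℝ) ^ (-σ)|) ?_ ?_
    · exact Continuous.aestronglyMeasurable (by fun_prop)
    · filter_upwards with τ
      rw [norm_mul, Complex.norm_exp_ofReal_mul_I, mul_one, Complex.norm_real, Real.norm_eq_abs]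
  · simp_rw [term_vonMangoldt_linePt]
    simp only [norm_mul, Complex.norm_exp_ofReal_mul_I, mul_one]
    simp_rw [integral_mul_const]
    apply Summable.mul_left
    refine hsum.congr fun n => ?_
    rw [Complex.norm_real, Real.norm_of_nonneg]
    exact mul_nonneg ArithmeticFunction.vonMangoldt_nonneg (by positivity)

open MeasureTheory in
/-- The counterpart of `sum_eq_integral` for the pole: `1/(s - 1) = ∫_0^∞ e^{-(s-1)t} dt`. -/
lemma pole_eq_integral (H : SchwartzMap ℝ ℂ) (X : ℝ) {σ : ℝ} (hσ : 1 < σ) :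
    ∫ t in Set.Ioi (0:ℝ), Complex.exp (-(σ - 1) * t) * H (t - X) =
      ∫ τ : ℝ, FourierTransform.fourier H τ * (phase X τ * (1 / (linePt σ τ - 1))) := by
  set F := FourierTransform.fourier H
  have hFi : Integrable F := F.integrable
  have h0 : ∀ τ, 0 < (linePt σ τ - 1).re := fun τ => by simp [linePt_re, hσ]
  have e1 : ∀ τ t : ℝ, F τ * (phase X τ * Complex.exp (-(linePt σ τ - 1) * t)) =
      Complex.exp (-(σ - 1) * t) * (Complex.exp ((2 * Real.pi * τ * (t - X) : ℝ) * Complex.I) * F τ) := by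
    intro τ t
    rw [mul_comm (F τ), ← mul_assoc]
    congr 1
    unfold phase linePt
    rw [← Complex.exp_add, ← Complex.exp_add]
    congr 1
    push_cast
    ring
  have h1 : ∀ τ, F τ * (phase X τ * (1 / (linePt σ τ - 1))) =
      ∫ t in Set.Ioi (0:ℝ), F τ * (phase X τ * Complex.exp (-(linePt σ τ - 1) * t)) := by
    intro τ
    rw [integral_const_mul, integral_const_mul, integral_exp_mul_complex_Ioi (by
      have := h0 τ
      simpa using this)]
    have hne : linePt σ τ - 1 ≠ 0 := fun h => by simpa [h] using h0 τ
    rw [Complex.ofReal_zero, mul_zero, Complex.exp_zero, neg_div_neg_eq]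
  simp_rw [h1]
  rw [integral_integral_swap]
  · refine integral_congr_ae ?_
    filter_upwards with t
    rw [schwartz_inversion, ← integral_const_mul]
    congr 1; ext τ
    rw [e1]
  · have h2 : Integrable (fun t : ℝ => Complex.exp (-(σ - 1) * t)) (volume.restrict (Set.Ioi 0)) :=
      integrableOn_exp_mul_complex_Ioi (a := -((σ:ℂ) - 1)) (by simpa using hσ) 0
    have h3 := hFi.mul_prod h2
    have h4 := h3.bdd_mul (c := 1) (f := fun z : ℝ × ℝ =>
      Complex.exp ((2 * Real.pi * z.1 * (z.2 - X) : ℝ) * Complex.I))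
      (Continuous.aestronglyMeasurable (by fun_prop))
      (by filter_upwards with z; rw [Complex.norm_exp_ofReal_mul_I])
    refine h4.congr ?_
    filter_upwards with z
    simp only [Function.uncurry]
    rw [e1]; ring


lemma integrable_poly_mul_schwartz (F : SchwartzMap ℝ ℂ) :
    MeasureTheory.Integrable fun τ : ℝ => (1 + |-(2 * Real.pi * τ)|) ^ 20 * ‖F τ‖ := by
  have h0 := (F.integrable_pow_mul MeasureTheory.volume 0).const_mul (2 ^ 19)
  have h1 := (F.integrable_pow_mul MeasureTheory.volume 20).const_mul (2 ^ 19 * (2 * Real.pi) ^ 20)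
  refine (h0.add h1).mono' (Continuous.aestronglyMeasurable (by fun_prop)) ?_
  filter_upwards with τ
  rw [Real.norm_of_nonneg (by positivity)]
  have h2 := add_pow_le (zero_le_one' ℝ) (abs_nonneg (-(2 * Real.pi * τ))) 20
  have h3 : |-(2 * Real.pi * τ)| = 2 * Real.pi * |τ| := by
    rw [abs_neg, abs_mul, abs_of_pos (by positivity)]
  rw [h3] at h2 ⊢
  refine (mul_le_mul_of_nonneg_right h2 (norm_nonneg _)).trans (le_of_eq ?_)
  simp only [Pi.add_apply, Real.norm_eq_abs]
  ring

lemma continuous_zetaG_linePt {σ : ℝ} (hσ : 1 ≤ σ) : Continuous fun τ => zetaG (linePt σ τ) :=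
  continuousOn_zetaG.comp_continuous (continuous_linePt σ) fun τ => by
    simpa [linePt_re] using hσ

open MeasureTheory in
lemma integrable_fourier_zetaG (F : SchwartzMap ℝ ℂ) (X : ℝ) {σ : ℝ} (hσ : 1 ≤ σ) (hσ2 : σ ≤ 2) :
    Integrable fun τ => F τ * (phase X τ * zetaG (linePt σ τ)) := by
  obtain ⟨C, hC, h⟩ := zetaG_bounds
  refine ((integrable_poly_mul_schwartz F).const_mul C).mono' ?_ ?_
  · exact (F.continuous.mul ((continuous_phase X).mul (continuous_zetaG_linePt hσ))).aestronglyMeasurable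
  · filter_upwards with τ
    rw [norm_mul, norm_mul, norm_phase, one_mul]
    have := (h (linePt σ τ) (by simpa [linePt_re]) (by simpa [linePt_re])).1
    rw [linePt_im] at this
    calc _ ≤ ‖F τ‖ * (C * (1 + |-(2 * Real.pi * τ)|) ^ 20) := by gcongr
      _ = _ := by ring

open MeasureTheory in
lemma sum_sub_pole (H : SchwartzMap ℝ ℂ) (X : ℝ) {σ : ℝ} (hσ : 1 < σ) (hσ2 : σ ≤ 2) :
    ∑' n : ℕ, ((ArithmeticFunction.vonMangoldt n * (n : ℝ) ^ (-σ) : ℝ) : ℂ) * H (Real.log n - X) -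
      ∫ t in Set.Ioi (0:ℝ), Complex.exp (-(σ - 1) * t) * H (t - X) =
      ∫ τ : ℝ, FourierTransform.fourier H τ * (phase X τ * zetaG (linePt σ τ)) := by
  rw [sum_eq_integral H X hσ, pole_eq_integral H X hσ, sub_eq_iff_eq_add', ← integral_add]
  · congr 1; ext τ
    rw [LSeries_vonMangoldt_eq_zetaG (by simpa [linePt_re] using hσ)]
    ring
  · have hne : ∀ τ, linePt σ τ - 1 ≠ 0 := fun τ h => by
      have := congrArg Complex.re h
      simp [linePt_re] at this
      linarith
    refine (FourierTransform.fourier H).integrable.mul_bdd (c := 1 / (σ - 1)) ?_ ?_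
    · refine Continuous.aestronglyMeasurable ((continuous_phase X).mul ?_)
      exact continuous_const.div ((continuous_linePt σ).sub continuous_const) hne
    · filter_upwards with τ
      rw [norm_mul, norm_phase, one_mul, norm_div, norm_one]
      apply one_div_le_one_div_of_le (by linarith)
      refine le_trans ?_ (Complex.abs_re_le_norm _)
      simp [linePt_re, le_abs_self]
  · exact integrable_fourier_zetaG _ X hσ.le hσ2

open MeasureTheory Topology in
/-- The smoothed explicit formula on the line `Re s = 1`, obtained from `σ → 1⁺`. -/
lemma smoothed_formula {k : ℕ} (hk : 1 ≤ k) {b : ℝ} (hb : 0 < b) (X : ℝ) :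
    ∑' n : ℕ, ((ArithmeticFunction.vonMangoldt n * (n : ℝ) ^ (-1 : ℝ) : ℝ) : ℂ) *
        kerS hk hb (Real.log n - X) -
      ∫ t in Set.Ioi (0:ℝ), kerS hk hb (t - X) =
      ∫ τ : ℝ, FourierTransform.fourier (kerS hk hb) τ * (phase X τ * zetaG (linePt 1 τ)) := by
  set H := kerS hk hb
  obtain ⟨C, hC, hCk⟩ := kerH_le_exp hk (show -1 ≤ b by linarith)
  have hsum : Summable fun n : ℕ => ArithmeticFunction.vonMangoldt n * (n : ℝ) ^ (-2 : ℝ) := by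
    have := (ArithmeticFunction.LSeriesSummable_vonMangoldt (s := (2 : ℝ)) (by simp)).norm
    refine this.congr fun n => ?_
    rcases Nat.eq_zero_or_pos n with rfl | hn
    · simp
    rw [LSeries.norm_term_eq, if_neg hn.ne', Complex.ofReal_re, Complex.norm_real,
      Real.norm_of_nonneg ArithmeticFunction.vonMangoldt_nonneg, Real.rpow_neg (by positivity),
      div_eq_mul_inv]
  have hev : ∀ᶠ σ : ℝ in 𝓝[>] 1, 1 < σ ∧ σ ≤ 2 := by
    have h1 : ∀ᶠ σ : ℝ in 𝓝[>] 1, σ < 2 := nhdsWithin_le_nhds (Iio_mem_nhds (by norm_num))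
    filter_upwards [self_mem_nhdsWithin, h1] with σ h h' using ⟨h, h'.le⟩
  have t1 : Tendsto (fun σ : ℝ => ∑' n : ℕ,
      ((ArithmeticFunction.vonMangoldt n * (n : ℝ) ^ (-σ) : ℝ) : ℂ) * H (Real.log n - X)) (𝓝[>] 1)
      (𝓝 (∑' n : ℕ, ((ArithmeticFunction.vonMangoldt n * (n : ℝ) ^ (-1 : ℝ) : ℝ) : ℂ) *
        H (Real.log n - X))) := by
    refine tendsto_tsum_of_dominated_convergence (hsum.mul_left (C * Real.exp X)) ?_ ?_
    · intro n
      apply Tendsto.mul_const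
      refine (Complex.continuous_ofReal.tendsto _).comp ?_
      rcases Nat.eq_zero_or_pos n with rfl | hn
      · simp
      have hn0 : (0 : ℝ) < n := by exact_mod_cast hn
      apply Tendsto.const_mul
      have : Continuous fun σ : ℝ => (n : ℝ) ^ (-σ) :=
        Continuous.rpow continuous_const continuous_neg fun _ => Or.inl hn0.ne'
      exact (this.tendsto 1).mono_left nhdsWithin_le_nhds
    · filter_upwards [hev] with σ hσ n
      rcases Nat.eq_zero_or_pos n with rfl | hn
      · simp
      have hn0 : (0 : ℝ) < n := by exact_mod_cast hn
      have hn1 : (1 : ℝ) ≤ n := by exact_mod_cast hn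
      have hL : 0 ≤ ArithmeticFunction.vonMangoldt n := ArithmeticFunction.vonMangoldt_nonneg
      rw [norm_mul, Complex.norm_real, Real.norm_of_nonneg (by positivity), kerS_apply,
        Complex.norm_real, Real.norm_of_nonneg (kerH_pos _ _ _).le]
      have h1 : (n : ℝ) ^ (-σ) ≤ (n : ℝ) ^ (-1 : ℝ) := Real.rpow_le_rpow_of_exponent_le hn1 (by linarith)
      have h2 := hCk (Real.log n - X)
      have h3 : Real.exp (-1 * (Real.log n - X)) = Real.exp X * (n : ℝ) ^ (-1 : ℝ) := by
        rw [Real.rpow_def_of_pos hn0, ← Real.exp_add]; congr 1; ring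
      have h4 : (n : ℝ) ^ (-2 : ℝ) = (n : ℝ) ^ (-1 : ℝ) * (n : ℝ) ^ (-1 : ℝ) := by
        rw [← Real.rpow_add hn0]; norm_num
      rw [h3] at h2
      calc _ ≤ ArithmeticFunction.vonMangoldt n * (n : ℝ) ^ (-1 : ℝ) *
            (C * (Real.exp X * (n : ℝ) ^ (-1 : ℝ))) := by
            have := (kerH_pos k b (Real.log n - X)).le
            gcongr
        _ = _ := by rw [h4]; ring
  have t2 : Tendsto (fun σ : ℝ => ∫ t in Set.Ioi (0:ℝ), Complex.exp (-(σ - 1) * t) * H (t - X)) (𝓝[>] 1)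
      (𝓝 (∫ t in Set.Ioi (0:ℝ), H (t - X))) := by
    refine tendsto_integral_filter_of_dominated_convergence (fun t => ‖H (t - X)‖) ?_ ?_ ?_ ?_
    · filter_upwards with σ
      exact Continuous.aestronglyMeasurable (by fun_prop)
    · filter_upwards [hev] with σ hσ
      filter_upwards [ae_restrict_mem measurableSet_Ioi] with t ht
      rw [norm_mul, Complex.norm_exp]
      refine mul_le_of_le_one_left (norm_nonneg _) (Real.exp_le_one_iff.mpr ?_)
      have h1 : (-((σ:ℂ) - 1) * (t:ℂ)).re = -((σ - 1) * t) := by simp; ring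
      rw [h1]
      have : (0:ℝ) < t := ht
      nlinarith [hσ.1]
    · exact ((H.integrable (μ := volume)).comp_sub_right X).norm.integrableOn
    · filter_upwards with t
      have : Continuous fun σ : ℝ => Complex.exp (-((σ:ℂ) - 1) * t) * H (t - X) := by fun_prop
      have := (this.tendsto 1).mono_left (nhdsWithin_le_nhds (s := Set.Ioi 1))
      simpa using this
  have t3 : Tendsto (fun σ : ℝ => ∫ τ : ℝ, FourierTransform.fourier H τ *
      (phase X τ * zetaG (linePt σ τ))) (𝓝[>] 1)
      (𝓝 (∫ τ : ℝ, FourierTransform.fourier H τ * (phase X τ * zetaG (linePt 1 τ)))) := by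
    obtain ⟨C, hC, h⟩ := zetaG_bounds
    refine tendsto_integral_filter_of_dominated_convergence _ ?_ ?_
      ((integrable_poly_mul_schwartz (FourierTransform.fourier H)).const_mul C) ?_
    · filter_upwards [hev] with σ hσ
      exact (integrable_fourier_zetaG _ X hσ.1.le hσ.2).aestronglyMeasurable
    · filter_upwards [hev] with σ hσ
      filter_upwards with τ
      rw [norm_mul, norm_mul, norm_phase, one_mul]
      have := (h (linePt σ τ) (by simpa [linePt_re] using hσ.1.le) (by simpa [linePt_re] using hσ.2)).1
      rw [linePt_im] at this
      calc _ ≤ ‖FourierTransform.fourier H τ‖ * (C * (1 + |-(2 * Real.pi * τ)|) ^ 20) := by gcongr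
        _ = _ := by ring
    · filter_upwards with τ
      apply Tendsto.const_mul
      apply Tendsto.const_mul
      have h1 : ContinuousWithinAt zetaG {s : ℂ | 1 ≤ s.re} (linePt 1 τ) :=
        continuousOn_zetaG _ (by simp [linePt_re])
      refine h1.tendsto.comp (tendsto_nhdsWithin_iff.mpr ⟨?_, ?_⟩)
      · have : Continuous fun σ => linePt σ τ := by unfold linePt; fun_prop
        exact (this.tendsto 1).mono_left nhdsWithin_le_nhds
      · filter_upwards [hev] with σ hσ
        simpa [linePt_re] using hσ.1.le
  refine tendsto_nhds_unique (t1.sub t2) (t3.congr' ?_)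
  filter_upwards [hev] with σ hσ
  rw [sum_sub_pole H X hσ.1 hσ.2]

/-! ### The smoothed prime number theorem -/

open MeasureTheory in
/-- One integration by parts: the phase `e^{-2πiτX}` has an antiderivative of size `1/(2πX)`, and
the derivative of `F(τ) G(1 - 2πiτ)` is integrable. -/
lemma norm_fourier_zetaG_le (F : SchwartzMap ℝ ℂ) : ∃ C : ℝ, 0 < C ∧ ∀ X : ℝ, 0 < X →
    ‖∫ τ : ℝ, F τ * (phase X τ * zetaG (linePt 1 τ))‖ ≤ C / X := by
  obtain ⟨C, hC, h⟩ := zetaG_bounds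
  set g : ℝ → ℂ := fun τ => F τ * zetaG (linePt 1 τ) with hg
  set F' := SchwartzMap.derivCLM ℂ ℂ F with hF'
  set g' : ℝ → ℂ := fun τ => F' τ * zetaG (linePt 1 τ) +
    F τ * (deriv zetaG (linePt 1 τ) * (-(2 * Real.pi : ℝ) * Complex.I)) with hg'
  have hre : ∀ τ, 1 ≤ (linePt 1 τ).re := fun τ => by simp [linePt_re]
  have hre2 : ∀ τ, (linePt 1 τ).re ≤ 2 := fun τ => by simp [linePt_re]
  have hgi : Integrable g := by
    have := integrable_fourier_zetaG F 0 le_rfl one_le_two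
    refine this.congr ?_
    filter_upwards with τ
    simp [hg, phase]
  have hder : ∀ τ, HasDerivAt g (g' τ) τ := by
    intro τ
    have h1 : HasDerivAt F (F' τ) τ := by
      rw [hF', SchwartzMap.derivCLM_apply]
      exact (F.differentiable τ).hasDerivAt
    have h2 : HasDerivAt (linePt 1) (-(2 * Real.pi : ℝ) * Complex.I) τ := by
      unfold linePt
      have h3 : HasDerivAt (fun τ : ℝ => 2 * Real.pi * τ) (2 * Real.pi) τ := by
        simpa using (hasDerivAt_id τ).const_mul (2 * Real.pi)
      have := ((h3.ofReal_comp).mul_const Complex.I).const_sub (1 : ℂ)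
      simpa using this
    have h4 : HasDerivAt zetaG (deriv zetaG (linePt 1 τ)) (linePt 1 τ) :=
      (hasDerivAt_zetaG (hre τ)).differentiableAt.hasDerivAt
    exact h1.mul (h4.comp τ h2)
  have hcd : Continuous fun τ => deriv zetaG (linePt 1 τ) :=
    continuousOn_deriv_zetaG.comp_continuous (continuous_linePt 1) hre
  have hcz := continuous_zetaG_linePt (le_refl (1:ℝ))
  have hgi' : Integrable g' := by
    refine Integrable.add ?_ ?_
    · refine ((integrable_poly_mul_schwartz F').const_mul C).mono'
        (F'.continuous.mul hcz).aestronglyMeasurable ?_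
      filter_upwards with τ
      have := (h _ (hre τ) (hre2 τ)).1
      rw [linePt_im] at this
      rw [norm_mul]
      calc _ ≤ ‖F' τ‖ * (C * (1 + |-(2 * Real.pi * τ)|) ^ 20) := by gcongr
        _ = _ := by ring
    · refine ((integrable_poly_mul_schwartz F).const_mul (C * (2 * Real.pi))).mono'
        (F.continuous.mul (hcd.mul continuous_const)).aestronglyMeasurable ?_
      filter_upwards with τ
      have := (h _ (hre τ) (hre2 τ)).2
      rw [linePt_im] at this
      rw [norm_mul, norm_mul, norm_mul, norm_neg, Complex.norm_real, Complex.norm_I,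
        Real.norm_of_nonneg (by positivity), mul_one]
      calc _ ≤ ‖F τ‖ * (C * (1 + |-(2 * Real.pi * τ)|) ^ 20 * (2 * Real.pi)) := by gcongr
        _ = _ := by ring
  have hdg : deriv g = g' := funext fun τ => (hder τ).deriv
  have hfd := Real.fourier_deriv hgi (fun τ => (hder τ).differentiableAt) (by rwa [hdg])
  rw [hdg] at hfd
  refine ⟨(∫ τ, ‖g' τ‖) + 1, by positivity, fun X hX => ?_⟩
  have e1 : ∫ τ : ℝ, F τ * (phase X τ * zetaG (linePt 1 τ)) = FourierTransform.fourier g X := by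
    rw [Real.fourier_eq']
    congr 1; ext τ
    simp only [smul_eq_mul, RCLike.inner_apply, conj_trivial, hg, phase]
    rw [mul_comm X τ]
    ring
  have e2 := congrArg norm (congrFun hfd X)
  have e3 : ‖FourierTransform.fourier g' X‖ ≤ ∫ τ, ‖g' τ‖ := by
    rw [Real.fourier_eq']
    refine (norm_integral_le_integral_norm _).trans (le_of_eq ?_)
    congr 1; ext τ
    rw [norm_smul, Complex.norm_exp_ofReal_mul_I, one_mul]
  have e4 : ‖(2 * (Real.pi : ℂ) * Complex.I * (X : ℂ))‖ = 2 * Real.pi * X := by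
    simp [abs_of_pos hX, abs_of_pos Real.pi_pos]
  rw [e1, le_div_iff₀ hX]
  rw [norm_smul, e4] at e2
  have := Real.pi_gt_three
  have h0 := norm_nonneg (FourierTransform.fourier g X)
  nlinarith [mul_nonneg hX.le h0]

lemma summable_vonMangoldt_kerH {k : ℕ} (hk : 1 ≤ k) {b : ℝ} (hb : 0 < b) (X : ℝ) :
    Summable fun n : ℕ => ArithmeticFunction.vonMangoldt n / n * kerH k b (Real.log n - X) := by
  obtain ⟨C, hC, hCk⟩ := kerH_le_exp hk (show -1 ≤ b by linarith)
  have hsum : Summable fun n : ℕ => ArithmeticFunction.vonMangoldt n * (n : ℝ) ^ (-2 : ℝ) := by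
    have := (ArithmeticFunction.LSeriesSummable_vonMangoldt (s := (2 : ℝ)) (by simp)).norm
    refine this.congr fun n => ?_
    rcases Nat.eq_zero_or_pos n with rfl | hn
    · simp
    rw [LSeries.norm_term_eq, if_neg hn.ne', Complex.ofReal_re, Complex.norm_real,
      Real.norm_of_nonneg ArithmeticFunction.vonMangoldt_nonneg, Real.rpow_neg (by positivity),
      div_eq_mul_inv]
  have hL : ∀ n, 0 ≤ ArithmeticFunction.vonMangoldt n := fun n => ArithmeticFunction.vonMangoldt_nonneg
  refine Summable.of_nonneg_of_le (fun n => ?_) (fun n => ?_) (hsum.mul_left (C * Real.exp X))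
  · have := (kerH_pos k b (Real.log n - X)).le
    have := hL n
    positivity
  · rcases Nat.eq_zero_or_pos n with rfl | hn
    · simp
    have hn0 : (0 : ℝ) < n := by exact_mod_cast hn
    have h2 := hCk (Real.log n - X)
    have h3 : Real.exp (-1 * (Real.log n - X)) = Real.exp X * (n : ℝ)⁻¹ := by
      rw [← Real.exp_log hn0, ← Real.exp_neg, ← Real.exp_add, Real.exp_log hn0]; congr 1; ring
    have h4 : (n : ℝ) ^ (-2 : ℝ) = (n : ℝ)⁻¹ * (n : ℝ)⁻¹ := by
      rw [← Real.rpow_neg_one, ← Real.rpow_add hn0]; norm_num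
    rw [h3] at h2
    calc _ ≤ ArithmeticFunction.vonMangoldt n / n * (C * (Real.exp X * (n : ℝ)⁻¹)) := by
          have := hL n
          gcongr
      _ = _ := by rw [h4]; ring

open MeasureTheory in
/-- Prime number theorem for the smooth weight `kerH`, with error `O(1 / X)`. -/
theorem smoothed_pnt {k : ℕ} (hk : 1 ≤ k) {b : ℝ} (hb : 0 < b) :
    ∃ C : ℝ, 0 < C ∧ ∀ X : ℝ, 0 < X →
      |∑' n : ℕ, ArithmeticFunction.vonMangoldt n / n * kerH k b (Real.log n - X) -
        1 / k * Real.Gamma (b / k)| ≤ C / X := by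
  obtain ⟨C, hC, h⟩ := norm_fourier_zetaG_le (FourierTransform.fourier (kerS hk hb))
  have hi1 : Integrable fun x : ℝ => |x| * kerH k b x := by
    have := (kerS hk hb).integrable_pow_mul volume 1
    refine this.congr ?_
    filter_upwards with x
    rw [kerS_apply, Complex.norm_real, Real.norm_of_nonneg (kerH_pos _ _ _).le, pow_one,
      Real.norm_eq_abs]
  have hpos : 0 ≤ ∫ x : ℝ, |x| * kerH k b x :=
    integral_nonneg fun x => mul_nonneg (abs_nonneg _) (kerH_pos _ _ _).le
  refine ⟨C + ∫ x : ℝ, |x| * kerH k b x, by positivity, fun X hX => ?_⟩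
  have h1 := smoothed_formula hk hb X
  have e1 : ∑' n : ℕ, ((ArithmeticFunction.vonMangoldt n * (n : ℝ) ^ (-1 : ℝ) : ℝ) : ℂ) *
        kerS hk hb (Real.log n - X) =
      ((∑' n : ℕ, ArithmeticFunction.vonMangoldt n / n * kerH k b (Real.log n - X) : ℝ) : ℂ) := by
    rw [Complex.ofReal_tsum]
    congr 1; ext n
    rw [kerS_apply, Real.rpow_neg_one, ← div_eq_mul_inv]
    push_cast; rfl
  have e2 : ∫ t in Set.Ioi (0:ℝ), kerS hk hb (t - X) = ((∫ t in Set.Ioi (-X), kerH k b t : ℝ) : ℂ) := by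
    rw [← integral_complex_ofReal]
    have h2 := (measurePreserving_sub_right volume X).setIntegral_preimage_emb
      (MeasurableEquiv.subRight X).measurableEmbedding (fun t => ((kerH k b t : ℝ) : ℂ)) (Set.Ioi (-X))
    rw [← h2]
    simp only [kerS_apply, Set.preimage_sub_const_Ioi, neg_add_cancel]
  rw [e1, e2, ← Complex.ofReal_sub] at h1
  have h2 := h X hX
  rw [← h1, Complex.norm_real, Real.norm_eq_abs] at h2
  have h3 : ∫ t in Set.Iic (-X), kerH k b t ≤ (∫ x : ℝ, |x| * kerH k b x) / X := by
    rw [le_div_iff₀ hX, ← integral_mul_const]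
    calc _ ≤ ∫ t in Set.Iic (-X), |t| * kerH k b t := by
          refine setIntegral_mono_on ((integrable_kerH hk hb).mul_const X).integrableOn
            hi1.integrableOn measurableSet_Iic fun t ht => ?_
          have : X ≤ |t| := by
            have ht' : t ≤ -X := ht
            rw [abs_of_neg (by linarith)]; linarith
          rw [mul_comm]
          exact mul_le_mul_of_nonneg_right this (kerH_pos _ _ _).le
      _ ≤ _ := setIntegral_le_integral hi1
          (by filter_upwards with x using mul_nonneg (abs_nonneg _) (kerH_pos _ _ _).le)
  have h3' : 0 ≤ ∫ t in Set.Iic (-X), kerH k b t := integral_nonneg fun t => (kerH_pos _ _ _).le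
  have h4 := intervalIntegral.integral_Iic_add_Ioi (b := -X) (integrable_kerH hk hb).integrableOn
    (integrable_kerH hk hb).integrableOn
  rw [integral_kerH hk hb] at h4
  rw [add_div, ← h4]
  rw [abs_le] at h2 ⊢
  constructor <;> linarith [h2.1, h2.2]

/-! ### Sums over primes without the weight `log p` -/

/-- `kerH k b` decays exponentially on both sides when `b ≥ 1`. -/
lemma kerH_le_two_sided {k : ℕ} (hk : 1 ≤ k) {b : ℝ} (hb : 1 ≤ b) :
    ∃ C : ℝ, 0 < C ∧ ∀ x, kerH k b x * (Real.exp x + Real.exp (-x)) ≤ C := by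
  obtain ⟨C₁, hC₁, h₁⟩ := kerH_le_exp hk (show (0:ℝ) ≤ b + 1 by linarith)
  obtain ⟨C₂, hC₂, h₂⟩ := kerH_le_exp hk (show (0:ℝ) ≤ b + -1 by linarith)
  refine ⟨C₁ + C₂, by positivity, fun x => ?_⟩
  have e1 := h₁ x
  have e2 := h₂ x
  rw [← kerH_mul_exp, zero_mul, Real.exp_zero, mul_one] at e1 e2
  rw [one_mul] at e1
  rw [neg_one_mul] at e2
  rw [mul_add]; linarith

/-- With `y = e^X` the terms are at most a constant times `y/(n² + y²)`, which is dominated by a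
telescoping series with sum independent of `y`. -/
lemma sum_inv_kerH_le {k : ℕ} (hk : 1 ≤ k) {b : ℝ} (hb : 1 ≤ b) :
    ∃ C : ℝ, 0 < C ∧ ∀ X : ℝ,
      (Summable fun n : ℕ => (n : ℝ)⁻¹ * kerH k b (Real.log n - X)) ∧
      ∑' n : ℕ, (n : ℝ)⁻¹ * kerH k b (Real.log n - X) ≤ C := by
  obtain ⟨C, hC, h⟩ := kerH_le_two_sided hk hb
  refine ⟨2 * C, by positivity, fun X => ?_⟩
  set y := Real.exp X with hy
  have hy0 : 0 < y := Real.exp_pos X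
  have hf0 : ∀ n : ℕ, 0 ≤ (n : ℝ)⁻¹ * kerH k b (Real.log n - X) := fun n =>
    mul_nonneg (by positivity) (kerH_pos _ _ _).le
  have hb1 : ∀ n : ℕ, ((n + 1 : ℕ) : ℝ)⁻¹ * kerH k b (Real.log ((n + 1 : ℕ) : ℝ) - X) ≤
      2 * C * y * (1 / ((n : ℝ) + y) - 1 / (((n + 1 : ℕ) : ℝ) + y)) := by
    intro n
    have hn : (0 : ℝ) < ((n + 1 : ℕ) : ℝ) := by positivity
    have h1 := h (Real.log ((n + 1 : ℕ) : ℝ) - X)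
    rw [neg_sub, Real.exp_sub, Real.exp_sub, Real.exp_log hn, ← hy] at h1
    set K := kerH k b (Real.log ((n + 1 : ℕ) : ℝ) - X)
    have hK : 0 < K := kerH_pos _ _ _
    have hn' : ((n + 1 : ℕ) : ℝ) = (n : ℝ) + 1 := by push_cast; ring
    rw [hn'] at h1 hn ⊢
    set a : ℝ := (n : ℝ) + 1
    have ha : 1 ≤ a := by simp [a]
    have hna : (n : ℝ) = a - 1 := by simp [a]
    rw [hna]
    have h2 : a / y + y / a = (a ^ 2 + y ^ 2) / (a * y) := by field_simp
    rw [h2, mul_div_assoc', div_le_iff₀ (by positivity)] at h1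
    have h3 : 1 / (a - 1 + y) - 1 / (a + y) = 1 / ((a - 1 + y) * (a + y)) := by
      have : a - 1 + y ≠ 0 := by apply ne_of_gt; linarith
      field_simp; ring
    rw [h3, mul_one_div, inv_mul_eq_div, div_le_div_iff₀ hn (by nlinarith)]
    have h4 : (a - 1 + y) * (a + y) ≤ 2 * (a ^ 2 + y ^ 2) := by nlinarith [sq_nonneg (a - y)]
    nlinarith
  have hpart : ∀ N : ℕ, ∑ n ∈ Finset.range N, (n : ℝ)⁻¹ * kerH k b (Real.log n - X) ≤ 2 * C := by
    intro N
    calc _ ≤ ∑ n ∈ Finset.range (N + 1), (n : ℝ)⁻¹ * kerH k b (Real.log n - X) :=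
          Finset.sum_le_sum_of_subset_of_nonneg (Finset.range_subset_range.mpr (Nat.le_succ N))
            fun n _ _ => hf0 n
      _ = ∑ n ∈ Finset.range N, ((n + 1 : ℕ) : ℝ)⁻¹ * kerH k b (Real.log ((n + 1 : ℕ) : ℝ) - X) := by
          rw [Finset.sum_range_succ']; simp
      _ ≤ ∑ n ∈ Finset.range N, 2 * C * y * (1 / ((n : ℝ) + y) - 1 / (((n + 1 : ℕ) : ℝ) + y)) :=
          Finset.sum_le_sum fun n _ => hb1 n
      _ = 2 * C * y * (1 / (((0 : ℕ) : ℝ) + y) - 1 / ((N : ℝ) + y)) := by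
          rw [← Finset.mul_sum, Finset.sum_range_sub' (fun n : ℕ => 1 / ((n : ℝ) + y))]
      _ ≤ 2 * C * y * (1 / y) := by
          have : 0 ≤ 1 / ((N : ℝ) + y) := by positivity
          simp only [Nat.cast_zero, zero_add]
          gcongr; linarith
      _ = 2 * C := by field_simp
  exact ⟨summable_of_sum_range_le hf0 hpart, Real.tsum_le_of_sum_range_le hf0 hpart⟩

/-- The prime sum `∑_p p⁻¹ H(log p - X)` with weight `H = kerH k b`. -/
noncomputable def primeT (k : ℕ) (b X : ℝ) : ℝ :=
  ∑' p : Nat.Primes, ((p : ℕ) : ℝ)⁻¹ * kerH k b (Real.log (p : ℕ) - X)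

lemma primeT_nonneg (k : ℕ) (b X : ℝ) : 0 ≤ primeT k b X :=
  tsum_nonneg fun p => mul_nonneg (by positivity) (kerH_pos _ _ _).le

lemma summable_primeT {k : ℕ} (hk : 1 ≤ k) {b : ℝ} (hb : 1 ≤ b) (X : ℝ) :
    Summable fun p : Nat.Primes => ((p : ℕ) : ℝ)⁻¹ * kerH k b (Real.log (p : ℕ) - X) := by
  obtain ⟨C, hC, h⟩ := sum_inv_kerH_le hk hb
  exact (h X).1.subtype {p : ℕ | p.Prime}

lemma primeT_le {k : ℕ} (hk : 1 ≤ k) {b : ℝ} (hb : 1 ≤ b) :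
    ∃ C : ℝ, 0 < C ∧ ∀ X : ℝ, primeT k b X ≤ C := by
  obtain ⟨C, hC, h⟩ := sum_inv_kerH_le hk hb
  refine ⟨C, hC, fun X => le_trans ?_ (h X).2⟩
  exact Summable.tsum_subtype_le (fun n : ℕ => (n : ℝ)⁻¹ * kerH k b (Real.log n - X)) {p : ℕ | p.Prime}
    (fun n => mul_nonneg (by positivity) (kerH_pos _ _ _).le) (h X).1

/-- `Λ` restricted to the proper prime powers. -/
noncomputable def properLambda (n : ℕ) : ℝ :=
  ArithmeticFunction.vonMangoldt n - if n.Prime then Real.log n else 0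

lemma properLambda_nonneg (n : ℕ) : 0 ≤ properLambda n := by
  unfold properLambda
  split_ifs with h
  · rw [ArithmeticFunction.vonMangoldt_apply_prime h, sub_self]
  · simp


/-- Partial summation from `ψ(x) - θ(x) = O(√x)`. -/
lemma summable_properLambda : Summable fun n : ℕ => properLambda n * (n : ℝ) ^ (-(3 / 4) : ℝ) := by
  have h1 : ((fun n : ℕ => ∑ k ∈ Finset.Icc 1 n, properLambda k) =O[atTop]
      fun n : ℕ => (n : ℝ) ^ (1 / 2 : ℝ)) := by
    have h2 := Chebyshev.isBigO_psi_sub_theta_sqrt.comp_tendsto tendsto_natCast_atTop_atTop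
    refine h2.congr (fun n => ?_) (fun n => ?_)
    · simp only [Function.comp, Pi.sub_apply, Chebyshev.psi, Chebyshev.theta, Nat.floor_natCast,
        properLambda, Finset.sum_sub_distrib, Finset.sum_filter]
      rfl
    · simp [Real.sqrt_eq_rpow]
  have := LSeriesSummable_of_sum_norm_bigO_and_nonneg (s := ((3 / 4 : ℝ) : ℂ)) h1 properLambda_nonneg
    (by norm_num) (by rw [Complex.ofReal_re]; norm_num)
  refine this.norm.congr fun n => ?_
  rcases Nat.eq_zero_or_pos n with rfl | hn
  · simp
  rw [LSeries.norm_term_eq, if_neg hn.ne', Complex.ofReal_re, Complex.norm_real,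
    Real.norm_of_nonneg (properLambda_nonneg n), Real.rpow_neg (by positivity), div_eq_mul_inv]

/-- The prime number theorem for `kerH` with the weight `log p` supported on primes. -/
lemma primeLog_asymp {k : ℕ} (hk : 1 ≤ k) {b : ℝ} (hb : 1 ≤ b) :
    ∃ C : ℝ, 0 < C ∧ ∀ X : ℝ, 0 < X →
      (Summable fun p : Nat.Primes =>
        Real.log (p : ℕ) * (((p : ℕ) : ℝ)⁻¹ * kerH k b (Real.log (p : ℕ) - X))) ∧
      |∑' p : Nat.Primes, Real.log (p : ℕ) * (((p : ℕ) : ℝ)⁻¹ * kerH k b (Real.log (p : ℕ) - X)) -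
        1 / k * Real.Gamma (b / k)| ≤ C / X := by
  obtain ⟨C₁, hC₁, h₁⟩ := smoothed_pnt hk (show 0 < b by linarith)
  obtain ⟨C₂, hC₂, h₂⟩ := kerH_le_exp hk (show 1 / 4 ≤ b by linarith)
  set D := ∑' n : ℕ, properLambda n * (n : ℝ) ^ (-(3 / 4) : ℝ) with hD
  have hD0 : 0 ≤ D := tsum_nonneg fun n => mul_nonneg (properLambda_nonneg n) (by positivity)
  refine ⟨C₁ + 4 * (C₂ * D), by positivity, fun X hX => ?_⟩
  set w : ℕ → ℝ := fun n => (n : ℝ)⁻¹ * kerH k b (Real.log n - X) with hw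
  have hw0 : ∀ n, 0 ≤ w n := fun n => mul_nonneg (by positivity) (kerH_pos _ _ _).le
  have hS : Summable fun n : ℕ => ArithmeticFunction.vonMangoldt n * w n := by
    refine (summable_vonMangoldt_kerH hk (show 0 < b by linarith) X).congr fun n => ?_
    rw [hw]; ring
  have hle : ∀ n, properLambda n * w n ≤
      C₂ * Real.exp (-(X / 4)) * (properLambda n * (n : ℝ) ^ (-(3 / 4) : ℝ)) := by
    intro n
    rcases Nat.eq_zero_or_pos n with rfl | hn
    · simp [properLambda]
    have hn0 : (0 : ℝ) < n := by exact_mod_cast hn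
    have h3 := h₂ (Real.log n - X)
    have h4 : Real.exp (1 / 4 * (Real.log n - X)) = Real.exp (-(X / 4)) * (n : ℝ) ^ (1 / 4 : ℝ) := by
      rw [Real.rpow_def_of_pos hn0, ← Real.exp_add]; congr 1; ring
    have h5 : (n : ℝ) ^ (-(3 / 4) : ℝ) = (n : ℝ)⁻¹ * (n : ℝ) ^ (1 / 4 : ℝ) := by
      rw [← Real.rpow_neg_one, ← Real.rpow_add hn0]; norm_num
    rw [h4] at h3
    calc _ ≤ properLambda n * ((n : ℝ)⁻¹ * (C₂ * (Real.exp (-(X / 4)) * (n : ℝ) ^ (1 / 4 : ℝ)))) := by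
          have := properLambda_nonneg n
          rw [hw]; dsimp only; gcongr
      _ = _ := by rw [h5]; ring
  have hPs : Summable fun n => properLambda n * w n :=
    Summable.of_nonneg_of_le (fun n => mul_nonneg (properLambda_nonneg n) (hw0 n)) hle
      (summable_properLambda.mul_left _)
  have hind : (fun n : ℕ => ArithmeticFunction.vonMangoldt n * w n - properLambda n * w n) =
      {p : ℕ | p.Prime}.indicator fun n => Real.log n * w n := by
    ext n
    rw [Set.indicator_apply]
    simp only [properLambda, Set.mem_ofPred_eq]
    split_ifs <;> ring
  have hsub := hS.sub hPs
  rw [hind] at hsub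
  have hts : ∑' p : Nat.Primes, Real.log (p : ℕ) * w p =
      ∑' n : ℕ, ArithmeticFunction.vonMangoldt n * w n - ∑' n, properLambda n * w n := by
    rw [← hS.tsum_sub hPs, hind]
    exact tsum_subtype {p : ℕ | p.Prime} (fun n => Real.log n * w n)
  refine ⟨summable_subtype_iff_indicator.mpr hsub, ?_⟩
  change |∑' p : Nat.Primes, Real.log (p : ℕ) * w p - _| ≤ _
  rw [hts]
  have h6 := h₁ X hX
  have h7 : ∑' n : ℕ, ArithmeticFunction.vonMangoldt n / n * kerH k b (Real.log n - X) =
      ∑' n : ℕ, ArithmeticFunction.vonMangoldt n * w n := by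
    congr 1; ext n; rw [hw]; ring
  rw [h7] at h6
  have h8 : ∑' n, properLambda n * w n ≤ 4 * (C₂ * D) / X := by
    calc _ ≤ ∑' n, C₂ * Real.exp (-(X / 4)) * (properLambda n * (n : ℝ) ^ (-(3 / 4) : ℝ)) :=
          hPs.tsum_le_tsum hle (summable_properLambda.mul_left _)
      _ = C₂ * D * Real.exp (-(X / 4)) := by rw [tsum_mul_left]; ring
      _ ≤ C₂ * D * (4 / X) := by
          gcongr
          rw [Real.exp_neg, ← one_div, div_le_div_iff₀ (Real.exp_pos _) hX]
          have := Real.add_one_le_exp (X / 4)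
          linarith
      _ = _ := by ring
  have h9 : 0 ≤ ∑' n, properLambda n * w n :=
    tsum_nonneg fun n => mul_nonneg (properLambda_nonneg n) (hw0 n)
  rw [add_div]
  rw [abs_le] at h6 ⊢
  constructor <;> linarith [h6.1, h6.2]

/-- From `|x| ≤ 2 (e^{x/2} + e^{-x/2})`. -/
lemma abs_mul_kerH_le (k : ℕ) (b x : ℝ) :
    |x| * kerH k b x ≤ 2 * (kerH k (b - 1 / 2) x + kerH k (b + 1 / 2) x) := by
  have h1 := kerH_mul_exp k b (1 / 2) x
  have h2 := kerH_mul_exp k b (-(1 / 2)) x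
  rw [← sub_eq_add_neg] at h2
  rw [← h1, ← h2]
  have hK := kerH_pos k b x
  have h3 := Real.add_one_le_exp (1 / 2 * x)
  have h4 := Real.add_one_le_exp (-(1 / 2) * x)
  have h5 := Real.exp_pos (1 / 2 * x)
  have h6 := Real.exp_pos (-(1 / 2) * x)
  have : |x| ≤ 2 * (Real.exp (-(1 / 2) * x) + Real.exp (1 / 2 * x)) := by
    rw [abs_le]; constructor <;> linarith
  nlinarith

/-- Replacing `log p` by `X` costs a sum of the same shape with shifted exponents. -/
lemma abs_mul_primeT_sub_le {k : ℕ} (hk : 1 ≤ k) {b : ℝ} (hb : 3 / 2 ≤ b) :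
    ∃ C : ℝ, 0 < C ∧ ∀ X : ℝ, 0 < X →
      |X * primeT k b X - 1 / k * Real.Gamma (b / k)| ≤
        C / X + 2 * (primeT k (b - 1 / 2) X + primeT k (b + 1 / 2) X) := by
  obtain ⟨C, hC, h⟩ := primeLog_asymp hk (show 1 ≤ b by linarith)
  refine ⟨C, hC, fun X hX => ?_⟩
  obtain ⟨hs, h1⟩ := h X hX
  have hT := summable_primeT hk (show 1 ≤ b by linarith) X
  have hT1 := summable_primeT hk (show 1 ≤ b - 1 / 2 by linarith) X
  have hT2 := summable_primeT hk (show 1 ≤ b + 1 / 2 by linarith) X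
  have hd := hs.sub (hT.mul_left X)
  have e : ∑' p : Nat.Primes, Real.log (p : ℕ) * (((p : ℕ) : ℝ)⁻¹ * kerH k b (Real.log (p : ℕ) - X)) -
      X * primeT k b X = ∑' p : Nat.Primes,
        (Real.log (p : ℕ) * (((p : ℕ) : ℝ)⁻¹ * kerH k b (Real.log (p : ℕ) - X)) -
          X * (((p : ℕ) : ℝ)⁻¹ * kerH k b (Real.log (p : ℕ) - X))) := by
    rw [hs.tsum_sub (hT.mul_left X), tsum_mul_left, primeT]
  have h2 : |∑' p : Nat.Primes, Real.log (p : ℕ) * (((p : ℕ) : ℝ)⁻¹ * kerH k b (Real.log (p : ℕ) - X)) -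
      X * primeT k b X| ≤ 2 * (primeT k (b - 1 / 2) X + primeT k (b + 1 / 2) X) := by
    rw [e, ← Real.norm_eq_abs, primeT, primeT, ← hT1.tsum_add hT2, ← tsum_mul_left]
    refine tsum_of_norm_bounded ((hT1.add hT2).mul_left 2).hasSum fun p => ?_
    rw [← sub_mul, mul_left_comm, norm_mul, norm_mul, Real.norm_eq_abs (_ - _),
      Real.norm_of_nonneg (kerH_pos _ _ _).le, Real.norm_of_nonneg (by positivity)]
    have := mul_le_mul_of_nonneg_left (abs_mul_kerH_le k b (Real.log (p : ℕ) - X))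
      (show (0:ℝ) ≤ ((p : ℕ) : ℝ)⁻¹ by positivity)
    linarith
  rw [abs_le] at h1 h2 ⊢
  constructor <;> linarith [h1.1, h1.2, h2.1, h2.2]

/-- A first, cruder form of `primeT_asymp`, used to bound the error terms there. -/
lemma primeT_le_div {k : ℕ} (hk : 1 ≤ k) {b : ℝ} (hb : 3 / 2 ≤ b) :
    ∃ C : ℝ, 0 < C ∧ ∀ X : ℝ, 1 ≤ X → primeT k b X ≤ C / X := by
  obtain ⟨C, hC, h⟩ := abs_mul_primeT_sub_le hk hb
  obtain ⟨C₁, hC₁, h₁⟩ := primeT_le hk (show 1 ≤ b - 1 / 2 by linarith)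
  obtain ⟨C₂, hC₂, h₂⟩ := primeT_le hk (show 1 ≤ b + 1 / 2 by linarith)
  have hG : 0 < Real.Gamma (b / k) := Real.Gamma_pos_of_pos (by positivity)
  refine ⟨C + 2 * (C₁ + C₂) + 1 / k * Real.Gamma (b / k), by positivity, fun X hX => ?_⟩
  rw [le_div_iff₀ (by linarith)]
  have h3 := (abs_le.mp (h X (by linarith))).2
  have h4 : C / X ≤ C := div_le_self hC.le hX
  linarith [h₁ X, h₂ X]

/-- `∑_p p⁻¹ H(log p - X) = Γ(b/k) / (kX) + O(1 / X²)`. -/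
theorem primeT_asymp {k : ℕ} (hk : 1 ≤ k) {b : ℝ} (hb : 2 ≤ b) :
    ∃ C : ℝ, 0 < C ∧ ∀ X : ℝ, 1 ≤ X →
      |X * primeT k b X - 1 / k * Real.Gamma (b / k)| ≤ C / X := by
  obtain ⟨C, hC, h⟩ := abs_mul_primeT_sub_le hk (show 3 / 2 ≤ b by linarith)
  obtain ⟨C₁, hC₁, h₁⟩ := primeT_le_div hk (show 3 / 2 ≤ b - 1 / 2 by linarith)
  obtain ⟨C₂, hC₂, h₂⟩ := primeT_le_div hk (show 3 / 2 ≤ b + 1 / 2 by linarith)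
  refine ⟨C + 2 * (C₁ + C₂), by positivity, fun X hX => ?_⟩
  refine (h X (by linarith)).trans ?_
  have e : (C + 2 * (C₁ + C₂)) / X = C / X + 2 * (C₁ / X + C₂ / X) := by ring
  rw [e]
  linarith [h₁ X hX, h₂ X hX]

/-! ### Summation over `j` -/

lemma zetaR_eq {s : ℝ} (hs : 1 < s) : zetaR s = ∑' j : ℕ+, (j : ℝ) ^ (-s) := by
  unfold zetaR
  rw [zeta_eq_tsum_one_div_nat_add_one_cpow (by simpa using hs),
    tsum_pnat_eq_tsum_succ (f := fun n : ℕ => (n : ℝ) ^ (-s))]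
  have : (∑' n : ℕ, 1 / ((n : ℂ) + 1) ^ (s : ℂ)) = ((∑' n : ℕ, ((n + 1 : ℕ) : ℝ) ^ (-s) : ℝ) : ℂ) := by
    rw [Complex.ofReal_tsum]
    congr 1; ext n
    rw [Real.rpow_neg (by positivity), Complex.ofReal_inv, Complex.ofReal_cpow (by positivity), one_div]
    push_cast; rfl
  rw [this, Complex.ofReal_re]

lemma summable_pnat_rpow {s : ℝ} (hs : 1 < s) : Summable fun j : ℕ+ => (j : ℝ) ^ (-s) :=
  (Real.summable_nat_rpow.mpr (by linarith)).comp_injective PNat.coe_injective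

lemma zetaR_pos {s : ℝ} (hs : 1 < s) : 0 < zetaR s := by
  rw [zetaR_eq hs]
  exact (summable_pnat_rpow hs).tsum_pos (fun j => by positivity) 1 (by simp)

lemma summable_log_sq {k : ℕ} (hk : 1 ≤ k) :
    Summable fun j : ℕ+ => (j : ℝ) ^ (-(1 + 1 / k : ℝ)) * (1 + Real.log j) ^ 2 := by
  have hk0 : (0 : ℝ) < k := by exact_mod_cast hk
  refine Summable.of_nonneg_of_le (fun j => by positivity) (fun j => ?_)
    ((summable_pnat_rpow (s := 1 + 1 / (2 * k)) (by linarith [show 0 < 1 / (2 * (k:ℝ)) by positivity])).mul_left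
      ((1 + 4 * k) ^ 2 : ℝ))
  have hj : (1 : ℝ) ≤ j := by exact_mod_cast j.pos
  have hj0 : (0 : ℝ) < j := by linarith
  have hl := Real.log_nonneg hj
  have h1 := Real.log_le_rpow_div hj0.le (show (0:ℝ) < 1 / (4 * k) by positivity)
  have h2 : 1 ≤ (j : ℝ) ^ (1 / (4 * k) : ℝ) := Real.one_le_rpow hj (by positivity)
  have h3 : 1 + Real.log j ≤ (1 + 4 * k) * (j : ℝ) ^ (1 / (4 * k) : ℝ) := by
    rw [div_div_eq_mul_div, div_one] at h1
    linarith
  have h4 : (1 + Real.log j) ^ 2 ≤ (1 + 4 * k) ^ 2 * (j : ℝ) ^ (1 / (2 * k) : ℝ) := by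
    calc _ ≤ ((1 + 4 * k) * (j : ℝ) ^ (1 / (4 * k) : ℝ)) ^ 2 := by gcongr
      _ = _ := by
        rw [mul_pow, ← Real.rpow_natCast ((j : ℝ) ^ (1 / (4 * k) : ℝ)), ← Real.rpow_mul hj0.le]
        congr 2
        push_cast; field_simp; norm_num
  calc _ ≤ (j : ℝ) ^ (-(1 + 1 / k : ℝ)) * ((1 + 4 * k) ^ 2 * (j : ℝ) ^ (1 / (2 * k) : ℝ)) := by gcongr
    _ = (1 + 4 * k) ^ 2 * ((j : ℝ) ^ (-(1 + 1 / k : ℝ)) * (j : ℝ) ^ (1 / (2 * k) : ℝ)) := by ring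
    _ = _ := by
      rw [← Real.rpow_add hj0]
      congr 2
      field_simp; ring

/-- The change of variables behind `phim_eq`; it rests on `e^{k (log p - X)} = u j p^k` for
`X = (log (1/u) - log j)/k`. -/
lemma phim_term {k m : ℕ} (hk : 1 ≤ k) {u : ℝ} (hu : 0 < u) (j : ℕ+) (p : Nat.Primes) :
    (j : ℝ) ^ ((m : ℤ) - 1) * ((p : ℕ) : ℝ) ^ (k * m) * Real.exp (-u) ^ ((j : ℕ) * (p : ℕ) ^ k) =
      u ^ (-(m + 1 / k : ℝ)) * ((j : ℝ) ^ (-(1 + 1 / k : ℝ)) *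
        (((p : ℕ) : ℝ)⁻¹ * kerH k (1 + k * m) (Real.log (p : ℕ) - (-Real.log u - Real.log j) / k))) := by
  have hk0 : (0 : ℝ) < k := by exact_mod_cast hk
  have hj : (0 : ℝ) < j := by exact_mod_cast j.pos
  have hp : (0 : ℝ) < (p : ℕ) := by exact_mod_cast p.2.pos
  have e1 : Real.exp (k * (Real.log (p : ℕ) - (-Real.log u - Real.log j) / k)) =
      u * ((j : ℝ) * ((p : ℕ) : ℝ) ^ k) := by
    have : k * (Real.log (p : ℕ) - (-Real.log u - Real.log j) / k) =
        Real.log u + (Real.log j + k * Real.log (p : ℕ)) := by field_simp; ring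
    rw [this, Real.exp_add, Real.exp_add, Real.exp_log hu, Real.exp_log hj, Real.exp_nat_mul,
      Real.exp_log hp]
  unfold kerH
  rw [e1, Real.exp_sub, ← Real.rpow_intCast, ← Real.exp_nat_mul, div_eq_mul_inv (Real.exp _),
    ← Real.exp_neg]
  have e2 : ((((j : ℕ) * (p : ℕ) ^ k : ℕ) : ℝ)) * -u = -(u * ((j : ℝ) * ((p : ℕ) : ℝ) ^ k)) := by
    push_cast; ring
  rw [e2]
  simp only [← mul_assoc]
  congr 1
  rw [← Real.rpow_natCast ((p : ℕ) : ℝ), ← Real.rpow_neg_one ((p : ℕ) : ℝ), Real.rpow_def_of_pos hj,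
    Real.rpow_def_of_pos hj, Real.rpow_def_of_pos hu, Real.rpow_def_of_pos hp, Real.rpow_def_of_pos hp]
  simp only [← Real.exp_add]
  congr 1
  push_cast
  field_simp
  ring

lemma phim_eq {k m : ℕ} (hk : 1 ≤ k) {u : ℝ} (hu : 0 < u) :
    Phim k m (Real.exp (-u)) = u ^ (-(m + 1 / k : ℝ)) * ∑' j : ℕ+, (j : ℝ) ^ (-(1 + 1 / k : ℝ)) *
        primeT k (1 + k * m) ((-Real.log u - Real.log j) / k) := by
  unfold Phim primeT
  simp_rw [phim_term hk hu, tsum_mul_left]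

/-- An estimate uniform in `j`: for `log j ≤ L/2` it follows from `primeT_asymp`, and for larger `j`
from the boundedness of `primeT`, the right-hand side then being bounded below. -/
lemma primeT_uniform {k m : ℕ} (hk : 1 ≤ k) (hm : 1 ≤ m) :
    ∃ C : ℝ, 0 < C ∧ ∀ L : ℝ, 2 * k ≤ L → ∀ j : ℕ+,
      |primeT k (1 + k * m) ((L - Real.log j) / k) - Real.Gamma (m + 1 / k) / L| ≤
        C * (1 + Real.log j) ^ 2 / L ^ 2 := by
  have hk0 : (0 : ℝ) < k := by exact_mod_cast hk
  have hk1 : (1 : ℝ) ≤ k := by exact_mod_cast hk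
  have hm1 : (1 : ℝ) ≤ m := by exact_mod_cast hm
  have hb : (2 : ℝ) ≤ 1 + k * m := by nlinarith
  obtain ⟨C₁, hC₁, h₁⟩ := primeT_asymp hk hb
  obtain ⟨C₂, hC₂, h₂⟩ := primeT_le hk (show (1:ℝ) ≤ 1 + k * m by linarith)
  have eb : (1 + k * m : ℝ) / k = m + 1 / k := by field_simp; ring
  rw [eb] at h₁
  set G := Real.Gamma (m + 1 / k) with hG
  have hG0 : 0 < G := Real.Gamma_pos_of_pos (by positivity)
  refine ⟨4 * k ^ 2 * C₁ + 2 * G + 4 * (C₂ + G), by positivity, fun L hL j => ?_⟩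
  have hj : (1 : ℝ) ≤ j := by exact_mod_cast j.pos
  have hl := Real.log_nonneg hj
  set l := Real.log j
  have hL0 : 0 < L := by linarith
  have hT0 := primeT_nonneg k (1 + k * m) ((L - l) / k)
  set T := primeT k (1 + k * m) ((L - l) / k) with hT
  rw [le_div_iff₀ (by positivity)]
  rcases le_total l (L / 2) with h | h
  · have hX : 1 ≤ (L - l) / k := by rw [le_div_iff₀ hk0]; linarith
    have h3 := h₁ _ hX
    rw [← hT] at h3
    set M := L - l with hM
    have hM0 : 0 < M := by linarith
    have hM2 : L ≤ 2 * M := by linarith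
    have h4 : |T - G / M| ≤ C₁ * k ^ 2 / M ^ 2 := by
      have e : M / k * T - 1 / k * G = M / k * (T - G / M) := by field_simp
      rw [e, abs_mul, abs_of_pos (by positivity)] at h3
      rw [le_div_iff₀ (by positivity)]
      have : C₁ / (M / k) * (k * M) = C₁ * k ^ 2 := by field_simp
      rw [← this]
      have := mul_le_mul_of_nonneg_right h3 (show 0 ≤ k * M by positivity)
      refine le_trans (le_of_eq ?_) this
      field_simp
    have h5 : |G / M - G / L| ≤ G * l / (M * L) := by
      have : G / M - G / L = G * l / (M * L) := by
        field_simp; rw [hM]; ring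
      rw [this, abs_of_nonneg (by positivity)]
    have h6 : |T - G / L| ≤ C₁ * k ^ 2 / M ^ 2 + G * l / (M * L) :=
      (abs_sub_le _ (G / M) _).trans (add_le_add h4 h5)
    have h7 : C₁ * k ^ 2 / M ^ 2 * L ^ 2 ≤ 4 * k ^ 2 * C₁ := by
      rw [div_mul_eq_mul_div, div_le_iff₀ (by positivity)]
      have : L ^ 2 ≤ 4 * M ^ 2 := by nlinarith
      have := mul_le_mul_of_nonneg_left this (show 0 ≤ C₁ * k ^ 2 by positivity)
      linarith
    have h8 : G * l / (M * L) * L ^ 2 ≤ 2 * G * l := by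
      rw [div_mul_eq_mul_div, div_le_iff₀ (by positivity)]
      have := mul_le_mul_of_nonneg_left hM2 (show 0 ≤ G * l * L by positivity)
      linarith
    have h9 := mul_le_mul_of_nonneg_right h6 (sq_nonneg L)
    rw [add_mul] at h9
    have h10 : (1 : ℝ) ≤ (1 + l) ^ 2 := by nlinarith
    have h11 : l ≤ (1 + l) ^ 2 := by nlinarith
    have h12 : 0 ≤ 4 * k ^ 2 * C₁ := by positivity
    calc _ ≤ 4 * k ^ 2 * C₁ + 2 * G * l := by linarith
      _ ≤ 4 * k ^ 2 * C₁ * (1 + l) ^ 2 + 2 * G * (1 + l) ^ 2 + 4 * (C₂ + G) * (1 + l) ^ 2 := by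
        have := mul_le_mul_of_nonneg_left h10 h12
        have := mul_le_mul_of_nonneg_left h11 (show 0 ≤ 2 * G by positivity)
        have : 0 ≤ 4 * (C₂ + G) * (1 + l) ^ 2 := by positivity
        linarith
      _ = _ := by ring
  · have h3 : T ≤ C₂ := h₂ _
    have h4 : G / L ≤ G := div_le_self hG0.le (by linarith)
    have h4' : 0 < G / L := by positivity
    have h5 : |T - G / L| ≤ C₂ + G := by rw [abs_le]; constructor <;> linarith
    have h6 : L ^ 2 ≤ 4 * (1 + l) ^ 2 := by nlinarith
    calc _ ≤ (C₂ + G) * (4 * (1 + l) ^ 2) := by gcongr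
      _ ≤ _ := by
        have : 0 ≤ (4 * k ^ 2 * C₁ + 2 * G) * (1 + l) ^ 2 := by positivity
        linarith

/-- The behaviour of `Φ_(m)(e^{-u})` as `u → 0⁺`, in terms of `L = log (1/u)`. -/
theorem phim_asymp {k m : ℕ} (hk : 1 ≤ k) (hm : 1 ≤ m) :
    ∃ C : ℝ, 0 < C ∧ ∀ u : ℝ, 0 < u → 2 * k ≤ -Real.log u →
      |Phim k m (Real.exp (-u)) * u ^ (m + 1 / k : ℝ) -
        zetaR (1 + 1 / k) * Real.Gamma (m + 1 / k) / -Real.log u| ≤ C / (-Real.log u) ^ 2 := by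
  have hk0 : (0 : ℝ) < k := by exact_mod_cast hk
  have hs : (1:ℝ) < 1 + 1 / k := by linarith [show 0 < 1 / (k:ℝ) by positivity]
  obtain ⟨C, hC, h⟩ := primeT_uniform hk hm
  have hS := summable_log_sq hk
  have hS0 : 0 < ∑' j : ℕ+, (j : ℝ) ^ (-(1 + 1 / k : ℝ)) * (1 + Real.log j) ^ 2 :=
    hS.tsum_pos (fun j => by positivity) 1 (by simp)
  refine ⟨C * ∑' j : ℕ+, (j : ℝ) ^ (-(1 + 1 / k : ℝ)) * (1 + Real.log j) ^ 2, by positivity,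
    fun u hu hL => ?_⟩
  set L := -Real.log u
  set G := Real.Gamma (m + 1 / k)
  set d : ℕ+ → ℝ := fun j => (j : ℝ) ^ (-(1 + 1 / k : ℝ)) *
    (primeT k (1 + k * m) ((L - Real.log j) / k) - G / L) with hd
  have hdb : ∀ j, ‖d j‖ ≤ C / L ^ 2 * ((j : ℝ) ^ (-(1 + 1 / k : ℝ)) * (1 + Real.log j) ^ 2) := by
    intro j
    rw [hd, norm_mul, Real.norm_of_nonneg (by positivity), Real.norm_eq_abs]
    calc _ ≤ (j : ℝ) ^ (-(1 + 1 / k : ℝ)) * (C * (1 + Real.log j) ^ 2 / L ^ 2) := by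
          gcongr; exact h L hL j
      _ = _ := by ring
  have hds : Summable d := Summable.of_norm_bounded (hS.mul_left _) hdb
  have e : Phim k m (Real.exp (-u)) * u ^ (m + 1 / k : ℝ) - zetaR (1 + 1 / k) * G / L = ∑' j, d j := by
    rw [phim_eq hk hu, Real.rpow_neg hu.le, zetaR_eq hs]
    have e1 : ∑' j : ℕ+, (j : ℝ) ^ (-(1 + 1 / k : ℝ)) * primeT k (1 + k * m) ((L - Real.log j) / k) =
        ∑' j, d j + G / L * ∑' j : ℕ+, (j : ℝ) ^ (-(1 + 1 / k : ℝ)) := by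
      rw [← tsum_mul_left, ← hds.tsum_add ((summable_pnat_rpow hs).mul_left _)]
      congr 1; ext j; rw [hd]; ring
    rw [e1]
    have : u ^ (m + 1 / k : ℝ) ≠ 0 := (Real.rpow_pos_of_pos hu _).ne'
    field_simp
    ring
  rw [e, ← Real.norm_eq_abs]
  refine (tsum_of_norm_bounded (hS.mul_left _).hasSum hdb).trans (le_of_eq ?_)
  rw [tsum_mul_left]; ring

/-! ### Inversion: from `u` to `x` -/

/-- The trivial upper bound, valid for every `u > 0`; it forces `u → 0` as `Φ_(1) → ∞`. -/
lemma phim_le {k m : ℕ} (hk : 1 ≤ k) (hm : 1 ≤ m) :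
    ∃ C : ℝ, 0 < C ∧ ∀ u : ℝ, 0 < u → Phim k m (Real.exp (-u)) ≤ C * u ^ (-(m + 1 / k : ℝ)) := by
  have hk0 : (0 : ℝ) < k := by exact_mod_cast hk
  have hs : (1:ℝ) < 1 + 1 / k := by linarith [show 0 < 1 / (k:ℝ) by positivity]
  obtain ⟨C, hC, h⟩ := primeT_le hk (show (1:ℝ) ≤ 1 + k * m by
    linarith [show (0:ℝ) ≤ k * m by positivity])
  refine ⟨C * zetaR (1 + 1 / k), mul_pos hC (zetaR_pos hs), fun u hu => ?_⟩
  rw [phim_eq hk hu, mul_comm (C * _)]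
  gcongr
  rw [zetaR_eq hs, ← tsum_mul_left]
  have hle : ∀ j : ℕ+, (j : ℝ) ^ (-(1 + 1 / k : ℝ)) *
      primeT k (1 + k * m) ((-Real.log u - Real.log j) / k) ≤ C * (j : ℝ) ^ (-(1 + 1 / k : ℝ)) := by
    intro j
    rw [mul_comm C]
    gcongr
    exact h _
  have hsum := (summable_pnat_rpow hs).mul_left C
  refine Summable.tsum_le_tsum hle (Summable.of_nonneg_of_le (fun j => ?_) hle hsum) hsum
  exact mul_nonneg (by positivity) (primeT_nonneg _ _ _)

lemma isBigO_mul_sub_one {P Q δ : ℝ → ℝ} (hδ : Tendsto δ atTop (nhds 0))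
    (hP : (fun x => P x - 1) =O[atTop] δ) (hQ : (fun x => Q x - 1) =O[atTop] δ) :
    (fun x => P x * Q x - 1) =O[atTop] δ := by
  have hP1 : P =O[atTop] fun _ => (1 : ℝ) := by
    have h1 := (hP.trans (hδ.isBigO_one ℝ)).add (Asymptotics.isBigO_refl (fun _ : ℝ => (1 : ℝ)) atTop)
    simpa using h1
  have h2 : (fun x => P x * (Q x - 1)) =O[atTop] δ := by simpa using hP1.mul hQ
  refine (h2.add hP).congr_left fun x => ?_
  ring

lemma isBigO_rpow_sub_one {P δ : ℝ → ℝ} (hδ : Tendsto δ atTop (nhds 0)) (a : ℝ)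
    (hP : (fun x => P x - 1) =O[atTop] δ) : (fun x => P x ^ a - 1) =O[atTop] δ := by
  have h1 : Tendsto P atTop (nhds 1) := by
    have := (hP.trans_tendsto hδ).add_const 1
    simpa using this
  have h2 := (Real.hasDerivAt_rpow_const (x := 1) (p := a) (Or.inl one_ne_zero)).isBigO_sub
  have h3 := h2.comp_tendsto h1
  simp only [Function.comp_def, Real.one_rpow] at h3
  exact h3.trans hP

/-- Exact bookkeeping of the elimination of `u`: each of the three factors in the last parenthesis is
a power of a quantity tending to `1` when `P = Φ_(m)(e^{-u})`, `x = Φ_(1)(e^{-u})`, `L = log (1/u)`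
and `lx = log x`. -/
lemma main_identity {k m : ℕ} (hk : 1 ≤ k) {x u L Z G₁ Gm P lx s a : ℝ}
    (hs : s = 1 + 1 / k) (ha : a = (m - 1) / s) (hx : 0 < x) (hu : 0 < u) (hL : 0 < L)
    (hZ : 0 < Z) (hG₁ : 0 < G₁) (hGm : 0 < Gm) (hlx : 0 < lx) :
    P = x ^ (1 + a) * (lx / (s * Z * G₁)) ^ a * (Gm / G₁) *
      ((s * L / lx) ^ a * (x * u ^ s * L / (Z * G₁)) ^ (-(a + 1)) *
        (P * u ^ (m + 1 / k : ℝ) * L / (Z * Gm))) := by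
  have hk0 : (0 : ℝ) < k := by exact_mod_cast hk
  have hs0 : 0 < s := by rw [hs]; positivity
  have e1 : (lx / (s * Z * G₁)) ^ a * (s * L / lx) ^ a = (L / (Z * G₁)) ^ a := by
    rw [← Real.mul_rpow (by positivity) (by positivity)]
    congr 1
    field_simp
  have e2 : x * u ^ s * L / (Z * G₁) = x * u ^ s * (L / (Z * G₁)) := by ring
  set q := L / (Z * G₁) with hq
  have hq0 : 0 < q := by positivity
  have e3 : (x * u ^ s * q) ^ (-(a + 1)) = x ^ (-(a + 1)) * u ^ (s * (-(a + 1))) * q ^ (-(a + 1)) := by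
    rw [Real.mul_rpow (by positivity) hq0.le, Real.mul_rpow hx.le (by positivity), ← Real.rpow_mul hu.le]
  have e4 : x ^ (1 + a) * x ^ (-(a + 1)) = 1 := by
    rw [← Real.rpow_add hx]; ring_nf; exact Real.rpow_zero x
  have e5 : u ^ (s * (-(a + 1))) * u ^ (m + 1 / k : ℝ) = 1 := by
    rw [← Real.rpow_add hu]
    have : s * (-(a + 1)) + (m + 1 / k) = 0 := by
      rw [ha, hs]; rw [hs] at hs0; field_simp; ring
    rw [this, Real.rpow_zero]
  have e6 : q ^ a * q ^ (-(a + 1)) * q = 1 := by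
    rw [← Real.rpow_add hq0]
    have : a + -(a + 1) = -1 := by ring
    rw [this, Real.rpow_neg_one, inv_mul_cancel₀ hq0.ne']
  have e7 : (Gm / G₁) * (L / (Z * Gm)) = q := by rw [hq]; field_simp
  rw [e2, e3]
  symm
  calc _ = P * (x ^ (1 + a) * x ^ (-(a + 1))) * (u ^ (s * (-(a + 1))) * u ^ (m + 1 / k : ℝ)) *
        (((lx / (s * Z * G₁)) ^ a * (s * L / lx) ^ a) * q ^ (-(a + 1)) *
          ((Gm / G₁) * (L / (Z * Gm)))) := by ring
    _ = P := by rw [e4, e5, e1, e7, e6]; ring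

/-- Proposition 1.3, equation (1.6): asymptotic for `Φ_{(m)}(ρ(x))`, `m ≥ 1`. -/
theorem stmt3 (k : ℕ) (hk : 1 ≤ k) (ρ : ℝ → ℝ)
    (hρ : ∀ x, ρ x ∈ Set.Ioo (0 : ℝ) 1)
    (hx : ∀ᶠ x : ℝ in atTop, Phim k 1 (ρ x) = x) :
    ∀ m : ℕ, 1 ≤ m →
      ∃ E : ℝ → ℝ,
        (E =O[atTop] fun x => Real.log (Real.log x) / Real.log x) ∧
        ∀ᶠ x : ℝ in atTop,
          Phim k m (ρ x) =
            x ^ (((m : ℝ) * k + 1) / ((k : ℝ) + 1)) *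
              (Real.log x /
                  (((k : ℝ) + 1) / k * zetaR (((k : ℝ) + 1) / k) *
                    Real.Gamma (((k : ℝ) + 1) / k))) ^
                ((k : ℝ) * ((m : ℝ) - 1) / ((k : ℝ) + 1)) *
              (Real.Gamma ((m : ℝ) + 1 / k) / Real.Gamma (1 + 1 / (k : ℝ))) *
              (1 + E x) := by
  intro m hm
  have hk0 : (0 : ℝ) < k := by exact_mod_cast hk
  have hkk : ((k : ℝ) + 1) / k = 1 + 1 / k := by field_simp
  set s : ℝ := 1 + 1 / k with hs
  have hs1 : 1 < s := by rw [hs]; linarith [show 0 < 1 / (k:ℝ) by positivity]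
  have hs0 : 0 < s := by linarith
  set a : ℝ := (m - 1) / s with ha
  have hexp1 : ((m : ℝ) * k + 1) / ((k : ℝ) + 1) = 1 + a := by
    rw [ha, ← hkk]; field_simp; ring
  have hexp2 : (k : ℝ) * ((m : ℝ) - 1) / ((k : ℝ) + 1) = a := by
    rw [ha, ← hkk]; field_simp
  rw [hkk, hexp1, hexp2]
  set Z := zetaR s with hZ
  have hZ0 : 0 < Z := zetaR_pos hs1
  set G₁ := Real.Gamma s with hG₁
  have hG₁0 : 0 < G₁ := Real.Gamma_pos_of_pos hs0
  set Gm := Real.Gamma ((m : ℝ) + 1 / k) with hGm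
  have hGm0 : 0 < Gm := Real.Gamma_pos_of_pos (by positivity)
  -- `u = -log ρ` and `L = log (1 / u)`
  set u : ℝ → ℝ := fun x => -Real.log (ρ x) with hu
  have hu0 : ∀ x, 0 < u x := fun x => by
    have := Real.log_neg (hρ x).1 (hρ x).2
    simp only [hu]; linarith
  have hρu : ∀ x, ρ x = Real.exp (-u x) := fun x => by
    simp only [hu, neg_neg]; rw [Real.exp_log (hρ x).1]
  set L : ℝ → ℝ := fun x => -Real.log (u x) with hL
  set δ : ℝ → ℝ := fun x => Real.log (Real.log x) / Real.log x with hδ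
  have hlog := Real.tendsto_log_atTop
  have hloglog := Real.tendsto_log_atTop.comp hlog
  have hδ0 : Tendsto δ atTop (nhds 0) :=
    (Real.isLittleO_log_id_atTop.tendsto_div_nhds_zero).comp hlog
  -- a first bound: `log x ≤ c + s L`
  obtain ⟨C₀, hC₀, h₀⟩ := phim_le hk le_rfl
  have hxL : ∀ᶠ x in atTop, Real.log x ≤ Real.log C₀ + s * L x := by
    filter_upwards [hx, eventually_gt_atTop 0] with x h1 hx0
    have h2 := h₀ (u x) (hu0 x)
    rw [← hρu, h1] at h2
    have h3 := Real.log_le_log hx0 h2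
    rw [Real.log_mul hC₀.ne' (Real.rpow_pos_of_pos (hu0 x) _).ne', Real.log_rpow (hu0 x)] at h3
    refine h3.trans (le_of_eq ?_)
    simp only [hL, hs]; push_cast; ring
  have hLtop : Tendsto L atTop atTop := by
    have h1 : Tendsto (fun x => (Real.log x - Real.log C₀) / s) atTop atTop :=
      (tendsto_atTop_add_const_right _ _ hlog).atTop_div_const hs0
    refine tendsto_atTop_mono' _ ?_ h1
    filter_upwards [hxL] with x h
    rw [div_le_iff₀ hs0]; linarith
  -- the reciprocal of `L` is `O(δ)`
  have hLδ : (fun x => 1 / L x) =O[atTop] δ := by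
    refine Asymptotics.IsBigO.of_bound (2 * s) ?_
    filter_upwards [hxL, hlog.eventually_gt_atTop 0, hlog.eventually_ge_atTop (2 * Real.log C₀),
      hloglog.eventually_ge_atTop 1, hLtop.eventually_gt_atTop 0] with x h1 h2 h3 h4 h5
    simp only [Function.comp] at h4
    rw [Real.norm_of_nonneg (by positivity), Real.norm_of_nonneg (by simp only [hδ]; positivity)]
    simp only [hδ]
    rw [mul_div_assoc', div_le_div_iff₀ h5 h2]
    have : s * L x ≤ s * L x * Real.log (Real.log x) := le_mul_of_one_le_right (by positivity) h4
    linarith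
  -- `phim_asymp` for the index `j`, divided by its main term
  have hy : ∀ j : ℕ, 1 ≤ j → (fun x => Phim k j (ρ x) * u x ^ (j + 1 / k : ℝ) * L x /
      (Z * Real.Gamma (j + 1 / k)) - 1) =O[atTop] δ := by
    intro j hj
    obtain ⟨C, hC, h⟩ := phim_asymp hk hj
    have hG0 : 0 < Real.Gamma ((j : ℝ) + 1 / k) := Real.Gamma_pos_of_pos (by positivity)
    refine Asymptotics.IsBigO.trans (Asymptotics.IsBigO.of_bound
      (C / (Z * Real.Gamma (j + 1 / k))) ?_) hLδ
    filter_upwards [hLtop.eventually_ge_atTop (2 * k), hLtop.eventually_gt_atTop 0] with x h1 h2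
    have h3 := h (u x) (hu0 x) h1
    rw [← hρu] at h3
    change |_ - _ / L x| ≤ C / (L x) ^ 2 at h3
    have e : Phim k j (ρ x) * u x ^ (j + 1 / k : ℝ) * L x / (Z * Real.Gamma (j + 1 / k)) - 1 =
        (Phim k j (ρ x) * u x ^ (j + 1 / k : ℝ) - Z * Real.Gamma (j + 1 / k) / L x) *
          (L x / (Z * Real.Gamma (j + 1 / k))) := by
      field_simp
    rw [e, norm_mul, Real.norm_eq_abs, Real.norm_of_nonneg (by positivity),
      Real.norm_of_nonneg (by positivity)]
    calc _ ≤ C / (L x) ^ 2 * (L x / (Z * Real.Gamma (j + 1 / k))) := by gcongr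
      _ = _ := by field_simp
  have hy2 : (fun x => x * u x ^ s * L x / (Z * G₁) - 1) =O[atTop] δ := by
    refine (hy 1 le_rfl).congr' ?_ EventuallyEq.rfl
    filter_upwards [hx] with x h
    rw [h]; simp only [Nat.cast_one, hs, hG₁]
  have hy3 := hy m hm
  -- comparison of `sL` with `log x`
  have hy1 : (fun x => s * L x / Real.log x - 1) =O[atTop] δ := by
    have ht : Tendsto (fun x => x * u x ^ s * L x / (Z * G₁)) atTop (nhds 1) := by
      have := (hy2.trans_tendsto hδ0).add_const 1
      simpa using this
    set c := |Real.log (Z * G₁)| with hc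
    have hc0 : 0 ≤ c := abs_nonneg _
    have hsmall : ∀ᶠ x in atTop, Real.log (L x) ≤ L x / 4 := by
      have h1 := hLtop.eventually (Real.isLittleO_log_id_atTop.bound (show (0:ℝ) < 1 / 4 by norm_num))
      filter_upwards [h1, hLtop.eventually_gt_atTop 0] with x h2 h3
      rw [id, Real.norm_of_nonneg h3.le] at h2
      linarith [le_abs_self (Real.log (L x)), Real.norm_eq_abs (Real.log (L x))]
    refine Asymptotics.IsBigO.of_bound (3 + c) ?_
    filter_upwards [ht.eventually (lt_mem_nhds (show (1:ℝ) / 2 < 1 by norm_num)),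
      ht.eventually (gt_mem_nhds (show (1:ℝ) < 2 by norm_num)), hsmall,
      hLtop.eventually_ge_atTop (4 * (c + 1)), hloglog.eventually_ge_atTop 1,
      hlog.eventually_gt_atTop 0, eventually_gt_atTop 0] with x h1 h2 h3 h4 h5 h6 h7
    simp only [Function.comp] at h5
    have hL0 : 0 < L x := by linarith
    have hL1 : 1 ≤ L x := by linarith
    set y := x * u x ^ s * L x / (Z * G₁) with hy
    have hly : |Real.log y| ≤ 1 := by
      have e1 := Real.log_le_sub_one_of_pos (show 0 < y by linarith)
      have e2 := Real.one_sub_inv_le_log_of_pos (show 0 < y by linarith)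
      have e3 : y⁻¹ ≤ 2 := by
        rw [inv_le_comm₀ (by linarith) (by norm_num)]; linarith
      rw [abs_le]; constructor <;> linarith
    have hup := Real.rpow_pos_of_pos (hu0 x) s
    have e : Real.log y = Real.log x - s * L x + Real.log (L x) - Real.log (Z * G₁) := by
      rw [hy, Real.log_div (by positivity) (by positivity), Real.log_mul (by positivity) hL0.ne',
        Real.log_mul h7.ne' hup.ne', Real.log_rpow (hu0 x)]
      simp only [hL]; ring
    have hcc := abs_le.mp (le_refl c)
    have hc1 : -c ≤ Real.log (Z * G₁) := neg_abs_le _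
    have hc2 : Real.log (Z * G₁) ≤ c := le_abs_self _
    obtain ⟨hl1, hl2⟩ := abs_le.mp hly
    have hLx : L x ≤ 2 * Real.log x := by nlinarith
    have hlL : Real.log (L x) ≤ 1 + Real.log (Real.log x) := by
      have e1 := Real.log_le_log hL0 hLx
      rw [Real.log_mul (by norm_num) h6.ne'] at e1
      have := Real.log_two_lt_d9
      linarith
    have hlL0 := Real.log_nonneg hL1
    have e2 : s * L x / Real.log x - 1 = (s * L x - Real.log x) / Real.log x := by field_simp
    rw [e2, norm_div, Real.norm_of_nonneg h6.le, Real.norm_of_nonneg (show 0 ≤ δ x by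
      simp only [hδ]; positivity), Real.norm_eq_abs]
    simp only [hδ]
    rw [mul_div_assoc']
    gcongr
    have h8 : c ≤ c * Real.log (Real.log x) := le_mul_of_one_le_right hc0 h5
    rw [abs_le]; constructor <;> linarith
  refine ⟨fun x => (s * L x / Real.log x) ^ a * (x * u x ^ s * L x / (Z * G₁)) ^ (-(a + 1)) *
    (Phim k m (ρ x) * u x ^ (m + 1 / k : ℝ) * L x / (Z * Gm)) - 1, ?_, ?_⟩
  · exact isBigO_mul_sub_one hδ0 (isBigO_mul_sub_one hδ0 (isBigO_rpow_sub_one hδ0 a hy1)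
      (isBigO_rpow_sub_one hδ0 (-(a + 1)) hy2)) hy3
  · filter_upwards [hLtop.eventually_gt_atTop 0, hlog.eventually_gt_atTop 0,
      eventually_gt_atTop 0] with x h1 h2 h3
    rw [add_sub_cancel]
    exact main_identity hk hs ha h3 (hu0 x) h1 hZ0 hG₁0 hGm0 h2
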